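/- arXiv:math/0301175 — 2 statements merged into one kernel-verified Lean document; each statement's English description precedes it below -/
import Mathlib

section
/- Maxwell's equations from distributions of Lienard–Wiechert potentials: Let τ > 0 and r > 0. Let f ∈ C¹([0,τ)×ℝ³×ℝ³) vanish for |ξ| > r and satisfy the local conservation law ∂_t ρ_f + div_x j_f = 0, where ρ_f = ∫ f dξ and j_f = ∫ v(ξ) f dξ. Let u ∈ C²([0,τ)×ℝ³×ℝ³) vanish for |ξ| > r and solve, for each fixed ξ, the wave equation ∂_t²u − Δ_x u = f with u(0,x,ξ) = ∂_t u(0,x,ξ) = 0. Let E^in, B^in ∈ C²(ℝ³;ℝ³) satisfy div_x B^in = 0 and div_x E^in = ρ_f(0,·). Let A_I ∈ C²(ℝ³;ℝ³) satisfy div_x A_I = 0 and curl_x A_I = B^in, and let A⁰ ∈ C²([0,τ)×ℝ³;ℝ³) solve ∂_t²A⁰ − Δ_x A⁰ = 0 with A⁰(0,·) = A_I and ∂_t A⁰(0,·) = −E^in. Define φ(t,x) = ∫_{ℝ³} u(t,x,ξ) dξ, A(t,x) = A⁰(t,x) + ∫_{ℝ³} v(ξ) u(t,x,ξ) dξ,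 E = −∂_t A − ∇_x φ and B = curl_x A. Then ∂_t E − curl_x B = −j_f, div_x E = ρ_f, ∂_t B + curl_x E = 0, div_x B = 0, and E(0,·) = E^in, B(0,·) = B^in. -/
open MeasureTheory Real Set Filter Metric RealInnerProductSpace
open scoped ENNReal NNReal Topology

noncomputable section

/-- Physical space `ℝ³` with its Euclidean structure. -/
abbrev E3 : Type := EuclideanSpace ℝ (Fin 3)

/-- The `i`-th standard basis vector of `ℝ³`. -/
def e3 (i : Fin 3) : E3 := EuclideanSpace.single i 1

/-- The relativistic velocity `v(ξ) = ξ/√(1+|ξ|²)`. -/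
def vrel (ξ : E3) : E3 := (Real.sqrt (1 + ‖ξ‖ ^ 2))⁻¹ • ξ

/-- Partial derivative in the `i`-th coordinate direction. -/
def pd3 (u : E3 → ℝ) (i : Fin 3) (x : E3) : ℝ := fderiv ℝ u x (e3 i)

/-- Divergence of a vector field on `ℝ³`. -/
def divg (F : E3 → E3) (x : E3) : ℝ := ∑ i : Fin 3, pd3 (fun y => F y i) i x

/-- Curl of a vector field on `ℝ³`. -/
def curl3 (F : E3 → E3) (x : E3) : E3 :=
  (WithLp.equiv 2 (Fin 3 → ℝ)).symm
    ![pd3 (fun y => F y 2) 1 x - pd3 (fun y => F y 1) 2 x,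
      pd3 (fun y => F y 0) 2 x - pd3 (fun y => F y 2) 0 x,
      pd3 (fun y => F y 1) 0 x - pd3 (fun y => F y 0) 1 x]

/-- Time derivative on `[0,∞)` (one-sided at `t = 0`, the usual derivative at interior
points). -/
def timeD {α : Type*} [NormedAddCommGroup α] [NormedSpace ℝ α] (G : ℝ → α) (t : ℝ) : α :=
  derivWithin G (Set.Ici 0) t

/-- Laplacian of a scalar function on `ℝ³`. -/
def lapx (w : E3 → ℝ) (x : E3) : ℝ :=
  ∑ i : Fin 3, fderiv ℝ (fun y => fderiv ℝ w y (e3 i)) x (e3 i)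

/-- Laplacian of a vector field on `ℝ³`. -/
def lapxV (F : E3 → E3) (x : E3) : E3 :=
  ∑ i : Fin 3, fderiv ℝ (fun y => fderiv ℝ F y (e3 i)) x (e3 i)

/-- The scalar potential `φ(t,x) = ∫ u(t,x,ξ) dξ`. -/
def phiP (u : ℝ → E3 → E3 → ℝ) (t : ℝ) (x : E3) : ℝ := ∫ ξ : E3, u t x ξ

/-- The vector potential `A(t,x) = A⁰(t,x) + ∫ v(ξ) u(t,x,ξ) dξ`. -/
def AP (A0 : ℝ → E3 → E3) (u : ℝ → E3 → E3 → ℝ) (t : ℝ) (x : E3) : E3 :=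
  A0 t x + ∫ ξ : E3, u t x ξ • vrel ξ

/-- The electric field `E = -∂ₜA - ∇ₓφ`. -/
def EP (A0 : ℝ → E3 → E3) (u : ℝ → E3 → E3 → ℝ) (t : ℝ) (x : E3) : E3 :=
  -timeD (fun s => AP A0 u s x) t - gradient (phiP u t) x

/-- The magnetic field `B = curlₓ A`. -/
def BP (A0 : ℝ → E3 → E3) (u : ℝ → E3 → E3 → ℝ) (t : ℝ) (x : E3) : E3 :=
  curl3 (AP A0 u t) x


lemma integrable_of_cont_supp {V : Type*} [NormedAddCommGroup V] {g : E3 → V} {r : ℝ}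
    (hg : Continuous g) (h0 : ∀ ξ, r < ‖ξ‖ → g ξ = 0) : Integrable g := by
  apply hg.integrable_of_hasCompactSupport
  apply HasCompactSupport.of_support_subset_isCompact (isCompact_closedBall (0 : E3) r)
  intro ξ hξ
  by_contra hc
  apply hξ
  apply h0
  simpa using hc

lemma slice_cont {P V : Type*} [TopologicalSpace P] [TopologicalSpace V] {S : Set P}
    {F : P → E3 → V} (hF : ContinuousOn (Function.uncurry F) (S ×ˢ univ)) {p : P} (hp : p ∈ S) :
    Continuous (F p) := by
  have h : ContinuousOn (fun ξ : E3 => Function.uncurry F (p, ξ)) univ :=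
    hF.comp (by fun_prop) (fun ξ _ => ⟨hp, mem_univ _⟩)
  exact continuousOn_univ.1 h

lemma cont_param {P V : Type*} [TopologicalSpace P] [NormedAddCommGroup V] [NormedSpace ℝ V]
    {S : Set P}
    {F : P → E3 → V} {r : ℝ} (hF : ContinuousOn (Function.uncurry F) (S ×ˢ univ))
    (h0 : ∀ p ∈ S, ∀ ξ, r < ‖ξ‖ → F p ξ = 0) :
    ContinuousOn (fun p => ∫ ξ, F p ξ) S := by
  apply continuousOn_integral_of_compact_support (isCompact_closedBall (0 : E3) r) hF
  intro p x hp hx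
  apply h0 p hp
  simpa using hx

lemma hasFDerivWithinAt_param {P V : Type*} [NormedAddCommGroup P] [NormedSpace ℝ P]
    [NormedAddCommGroup V] [NormedSpace ℝ V] [CompleteSpace V] {S : Set P} (hS : Convex ℝ S)
    {F : P → E3 → V} {F' : P → E3 → P →L[ℝ] V} {r : ℝ}
    (hF : ContinuousOn (Function.uncurry F) (S ×ˢ univ))
    (hF' : ContinuousOn (Function.uncurry F') (S ×ˢ univ))
    (hd : ∀ p ∈ S, ∀ ξ, HasFDerivWithinAt (fun q => F q ξ) (F' p ξ) S p)
    (h0 : ∀ p ∈ S, ∀ ξ, r < ‖ξ‖ → F p ξ = 0)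
    (h0' : ∀ p ∈ S, ∀ ξ, r < ‖ξ‖ → F' p ξ = 0) {p : P} (hp : p ∈ S) :
    HasFDerivWithinAt (fun q => ∫ ξ, F q ξ) (∫ ξ, F' p ξ) S p := by
  rw [hasFDerivWithinAt_iff_isLittleO, Asymptotics.isLittleO_iff]
  intro ε hε
  set m : ℝ := volume.real (closedBall (0 : E3) r) with hm
  have hm0 : 0 ≤ m := measureReal_nonneg
  set δ := ε / (m + 1) with hδ
  have hδ0 : 0 < δ := by positivity
  obtain ⟨v, hv, hvb⟩ := (isCompact_closedBall (0 : E3) r).mem_uniformity_of_prod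
    (hF'.mono (prod_mono le_rfl (subset_univ _))) hp (Metric.dist_mem_uniformity hδ0)
  obtain ⟨η, hη, hηv⟩ := Metric.mem_nhdsWithin_iff.1 hv
  have hmem : ball p η ∩ S ∈ 𝓝[S] p := inter_comm S _ ▸ inter_mem_nhdsWithin S (ball_mem_nhds p hη)
  filter_upwards [hmem] with q hq
  have hI : ∀ q ∈ S, Integrable (F q) := fun q hq =>
    integrable_of_cont_supp (slice_cont hF hq) (h0 q hq)
  have hI' : Integrable (F' p) := integrable_of_cont_supp (slice_cont hF' hp) (h0' p hp)
  have hsub : Integrable (fun ξ => F q ξ - F p ξ) := (hI q hq.2).sub (hI p hp)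
  rw [ContinuousLinearMap.integral_apply hI', ← integral_sub (hI q hq.2) (hI p hp),
    ← integral_sub hsub (hI'.apply_continuousLinearMap _)]
  have hz : ∀ ξ ∉ closedBall (0 : E3) r, F q ξ - F p ξ - F' p ξ (q - p) = 0 := by
    intro ξ hξ
    have hξ : r < ‖ξ‖ := by simpa using hξ
    simp [h0 q hq.2 ξ hξ, h0 p hp ξ hξ, h0' p hp ξ hξ]
  rw [← setIntegral_eq_integral_of_forall_compl_eq_zero hz]
  have hb : ∀ ξ ∈ closedBall (0 : E3) r, ‖F q ξ - F p ξ - F' p ξ (q - p)‖ ≤ δ * ‖q - p‖ := by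
    intro ξ hξ
    have hcv : Convex ℝ (ball p η ∩ S) := (convex_ball p η).inter hS
    refine hcv.norm_image_sub_le_of_norm_hasFDerivWithin_le' (f := fun q => F q ξ)
      (f' := fun q => F' q ξ)
      (fun x hx => (hd x hx.2 ξ).mono inter_subset_right) ?_ ⟨mem_ball_self hη, hp⟩ hq
    intro x hx
    have := hvb x (hηv hx) ξ hξ
    simp only [mem_ofPred_eq, dist_eq_norm] at this
    exact this.le
  refine (norm_setIntegral_le_of_norm_le_const
    (isCompact_closedBall (0 : E3) r).measure_lt_top hb).trans ?_
  have : δ * m ≤ ε := by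
    rw [hδ, div_mul_eq_mul_div, div_le_iff₀ (by positivity)]
    nlinarith
  calc δ * ‖q - p‖ * m = (δ * m) * ‖q - p‖ := by ring
    _ ≤ ε * ‖q - p‖ := by gcongr

lemma hasDerivWithinAt_param {V : Type*} 
    [NormedAddCommGroup V] [NormedSpace ℝ V] [CompleteSpace V] {S : Set ℝ} (hS : Convex ℝ S)
    {F : ℝ → E3 → V} {F' : ℝ → E3 → V} {r : ℝ}
    (hF : ContinuousOn (Function.uncurry F) (S ×ˢ univ))
    (hF' : ContinuousOn (Function.uncurry F') (S ×ˢ univ))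
    (hd : ∀ p ∈ S, ∀ ξ, HasDerivWithinAt (fun q => F q ξ) (F' p ξ) S p)
    (h0 : ∀ p ∈ S, ∀ ξ, r < ‖ξ‖ → F p ξ = 0)
    (h0' : ∀ p ∈ S, ∀ ξ, r < ‖ξ‖ → F' p ξ = 0) {p : ℝ} (hp : p ∈ S) :
    HasDerivWithinAt (fun q => ∫ ξ, F q ξ) (∫ ξ, F' p ξ) S p := by
  have hI' : Integrable (F' p) := integrable_of_cont_supp (slice_cont hF' hp) (h0' p hp)
  have := hasFDerivWithinAt_param hS hF
    (F' := fun q ξ => ContinuousLinearMap.toSpanSingleton ℝ (F' q ξ)) (r := r) ?_ ?_ h0 ?_ hp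
  · have h2 := this.hasDerivWithinAt
    convert! h2 using 1
    rw [ContinuousLinearMap.integral_apply]
    · simp
    · exact (ContinuousLinearMap.toSpanSingletonCLE (𝕜 := ℝ) (E := V)).toContinuousLinearMap.integrable_comp hI'
  · exact (ContinuousLinearMap.toSpanSingletonCLE (𝕜 := ℝ) (E := V)).continuous.comp_continuousOn hF'
  · intro q hq ξ
    exact (hd q hq ξ).hasFDerivWithinAt
  · intro q hq ξ hξ
    simp [h0' q hq ξ hξ]

set_option linter.unusedSectionVars false

/-- The space-time slab `[0,τ) × ℝ³`. -/
def SLB (τ : ℝ) : Set (ℝ × E3) := Set.Ico 0 τ ×ˢ (Set.univ : Set E3)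

/-- Directional derivative within the slab. -/
def DD {V : Type*} [NormedAddCommGroup V] [NormedSpace ℝ V] (τ : ℝ) (v : ℝ × E3)
    (g : ℝ × E3 → V) (p : ℝ × E3) : V := fderivWithin ℝ g (SLB τ) p v

/-- time direction -/
def eT : ℝ × E3 := (1, 0)
/-- space directions -/
def eX (i : Fin 3) : ℝ × E3 := (0, e3 i)

lemma SLB_convex (τ : ℝ) : Convex ℝ (SLB τ) := (convex_Ico 0 τ).prod convex_univ

lemma SLB_uniq (τ : ℝ) : UniqueDiffOn ℝ (SLB τ) := (uniqueDiffOn_Ico 0 τ).prod uniqueDiffOn_univ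

lemma mem_SLB {τ t : ℝ} {x : E3} (ht : t ∈ Ico 0 τ) : (t, x) ∈ SLB τ := ⟨ht, mem_univ _⟩

section
variable {V : Type*} [NormedAddCommGroup V] [NormedSpace ℝ V] {τ : ℝ}

lemma DD_contDiffOn1 {g : ℝ × E3 → V} (hg : ContDiffOn ℝ 2 g (SLB τ)) (v : ℝ × E3) :
    ContDiffOn ℝ 1 (DD τ v g) (SLB τ) :=
  (hg.fderivWithin (SLB_uniq τ) (m := 1) (by norm_num)).clm_apply contDiffOn_const

lemma DD_contOn {g : ℝ × E3 → V} (hg : ContDiffOn ℝ 1 g (SLB τ)) (v : ℝ × E3) :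
    ContinuousOn (DD τ v g) (SLB τ) :=
  (hg.continuousOn_fderivWithin (SLB_uniq τ) (by norm_num)).clm_apply continuousOn_const

lemma DD_hasF {g : ℝ × E3 → V} (hg : ContDiffOn ℝ 1 g (SLB τ)) {p : ℝ × E3} (hp : p ∈ SLB τ) :
    HasFDerivWithinAt g (fderivWithin ℝ g (SLB τ) p) (SLB τ) p :=
  ((hg.differentiableOn (by norm_num)) p hp).hasFDerivWithinAt

lemma DD_eq_of_hasF {g : ℝ × E3 → V} {L : ℝ × E3 →L[ℝ] V} {p : ℝ × E3} (hp : p ∈ SLB τ)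
    (h : HasFDerivWithinAt g L (SLB τ) p) (v : ℝ × E3) : DD τ v g p = L v := by
  rw [DD, h.fderivWithin (SLB_uniq τ p hp)]

lemma SLB_closure (hτ : 0 < τ) {p : ℝ × E3} (hp : p ∈ SLB τ) : p ∈ closure (interior (SLB τ)) := by
  rw [SLB, interior_prod_eq, interior_Ico, interior_univ, closure_prod_eq, closure_univ,
    closure_Ioo hτ.ne]
  exact ⟨Ico_subset_Icc_self hp.1, mem_univ _⟩

lemma DD_comm (hτ : 0 < τ) {g : ℝ × E3 → V} (hg : ContDiffOn ℝ 2 g (SLB τ)) (v w : ℝ × E3)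
    {p : ℝ × E3} (hp : p ∈ SLB τ) : DD τ v (DD τ w g) p = DD τ w (DD τ v g) p := by
  have hs : IsSymmSndFDerivWithinAt ℝ g (SLB τ) p :=
    (hg p hp).isSymmSndFDerivWithinAt (by simp) (SLB_uniq τ) (SLB_closure hτ hp) hp
  have hd : DifferentiableWithinAt ℝ (fderivWithin ℝ g (SLB τ)) (SLB τ) p :=
    ((hg.fderivWithin (SLB_uniq τ) (m := 1) (by norm_num)).differentiableOn (by norm_num)) p hp
  have key : ∀ v w : ℝ × E3, DD τ v (DD τ w g) p
      = fderivWithin ℝ (fderivWithin ℝ g (SLB τ)) (SLB τ) p v w := by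
    intro v w
    have h1 : HasFDerivWithinAt (DD τ w g) _ (SLB τ) p :=
      hd.hasFDerivWithinAt.clm_apply (hasFDerivWithinAt_const w p (SLB τ))
    rw [DD_eq_of_hasF hp h1]
    simp
  rw [key, key]
  exact hs v w

lemma slice_hasF {g : ℝ × E3 → V} (hg : ContDiffOn ℝ 1 g (SLB τ)) {t : ℝ} (ht : t ∈ Ico 0 τ)
    (x : E3) : HasFDerivAt (fun y => g (t, y))
      ((fderivWithin ℝ g (SLB τ) (t, x)).comp (ContinuousLinearMap.inr ℝ ℝ E3)) x := by
  have h2 : HasFDerivWithinAt (fun y : E3 => (t, y)) (ContinuousLinearMap.inr ℝ ℝ E3) univ x :=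
    (hasFDerivAt_prodMk_right t x).hasFDerivWithinAt
  have := (DD_hasF hg (mem_SLB (x := x) ht)).comp x h2 (fun y _ => mem_SLB ht)
  exact hasFDerivWithinAt_univ.1 this

lemma slice_fderiv {g : ℝ × E3 → V} (hg : ContDiffOn ℝ 1 g (SLB τ)) {t : ℝ} (ht : t ∈ Ico 0 τ)
    (x w : E3) : fderiv ℝ (fun y => g (t, y)) x w = DD τ (0, w) g (t, x) := by
  rw [(slice_hasF hg ht x).fderiv]; rfl

lemma slice_contDiff {n : WithTop ℕ∞} {g : ℝ × E3 → V} (hg : ContDiffOn ℝ n g (SLB τ)) {t : ℝ}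
    (ht : t ∈ Ico 0 τ) : ContDiff ℝ n (fun y => g (t, y)) := by
  rw [← contDiffOn_univ]
  exact hg.comp (by fun_prop) (fun y _ => mem_SLB ht)

lemma slice_contX {g : ℝ × E3 → V} (hg : ContinuousOn g (SLB τ)) {t : ℝ}
    (ht : t ∈ Ico 0 τ) : Continuous (fun y => g (t, y)) := by
  rw [← continuousOn_univ]
  exact hg.comp (by fun_prop) (fun y _ => mem_SLB ht)

lemma slice_hasD {g : ℝ × E3 → V} (hg : ContDiffOn ℝ 1 g (SLB τ)) {t : ℝ} (ht : t ∈ Ico 0 τ)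
    (x : E3) : HasDerivWithinAt (fun s => g (s, x)) (DD τ eT g (t, x)) (Ico 0 τ) t := by
  have h2 : HasFDerivWithinAt (fun s : ℝ => (s, x)) (ContinuousLinearMap.inl ℝ ℝ E3) (Ico 0 τ) t :=
    (hasFDerivAt_prodMk_left t x).hasFDerivWithinAt
  have := ((DD_hasF hg (mem_SLB (x := x) ht)).comp t h2 (fun y hy => mem_SLB hy)).hasDerivWithinAt
  simpa [DD, eT, Function.comp_def] using this

lemma slice_timeD {g : ℝ × E3 → V} (hg : ContDiffOn ℝ 1 g (SLB τ)) {t : ℝ} (ht : t ∈ Ico 0 τ)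
    (x : E3) : timeD (fun s => g (s, x)) t = DD τ eT g (t, x) := by
  have h := slice_hasD hg ht x
  have h2 : HasDerivWithinAt (fun s => g (s, x)) (DD τ eT g (t, x)) (Ici 0) t := by
    apply h.mono_of_mem_nhdsWithin
    rw [← Ici_inter_Iio]
    exact inter_mem_nhdsWithin _ (Iio_mem_nhds ht.2)
  exact h2.derivWithin (uniqueDiffOn_Ici 0 t ht.1)

lemma slice_hasDerivAt {g : ℝ × E3 → V} (hg : ContDiffOn ℝ 1 g (SLB τ)) {t : ℝ} (ht : t ∈ Ioo 0 τ)
    (x : E3) : HasDerivAt (fun s => g (s, x)) (DD τ eT g (t, x)) t :=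
  (slice_hasD hg (Ioo_subset_Ico_self ht) x).hasDerivAt (Ico_mem_nhds ht.1 ht.2)

lemma timeD_congr {G H : ℝ → V} {t : ℝ} (ht : t ∈ Ico 0 τ) (h : ∀ s ∈ Ico 0 τ, G s = H s) :
    timeD G t = timeD H t := by
  apply Filter.EventuallyEq.derivWithin_eq _ (h t ht)
  have : Ico 0 τ ∈ 𝓝[Ici 0] t := by
    rw [← Ici_inter_Iio]
    exact inter_mem_nhdsWithin _ (Iio_mem_nhds ht.2)
  filter_upwards [this] with s hs using h s hs

lemma DD_congr {G H : ℝ × E3 → V} {p : ℝ × E3} (hp : p ∈ SLB τ) (v : ℝ × E3)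
    (h : ∀ s ∈ SLB τ, G s = H s) :
    DD τ v G p = DD τ v H p := by
  rw [DD, DD, fderivWithin_congr h (h p hp)]

lemma DD_add {g h : ℝ × E3 → V} (hg : ContDiffOn ℝ 1 g (SLB τ)) (hh : ContDiffOn ℝ 1 h (SLB τ))
    {p : ℝ × E3} (hp : p ∈ SLB τ) (v : ℝ × E3) :
    DD τ v (fun q => g q + h q) p = DD τ v g p + DD τ v h p :=
  DD_eq_of_hasF hp ((DD_hasF hg hp).add (DD_hasF hh hp)) v

lemma DD_sub {g h : ℝ × E3 → V} (hg : ContDiffOn ℝ 1 g (SLB τ)) (hh : ContDiffOn ℝ 1 h (SLB τ))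
    {p : ℝ × E3} (hp : p ∈ SLB τ) (v : ℝ × E3) :
    DD τ v (fun q => g q - h q) p = DD τ v g p - DD τ v h p :=
  DD_eq_of_hasF hp ((DD_hasF hg hp).sub (DD_hasF hh hp)) v

lemma DD_neg {g : ℝ × E3 → V} (hg : ContDiffOn ℝ 1 g (SLB τ))
    {p : ℝ × E3} (hp : p ∈ SLB τ) (v : ℝ × E3) :
    DD τ v (fun q => - g q) p = - DD τ v g p :=
  DD_eq_of_hasF hp ((DD_hasF hg hp).neg) v

lemma DD_sum {g : Fin 3 → ℝ × E3 → V} (hg : ∀ i, ContDiffOn ℝ 1 (g i) (SLB τ))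
    {p : ℝ × E3} (hp : p ∈ SLB τ) (v : ℝ × E3) :
    DD τ v (fun q => ∑ i, g i q) p = ∑ i, DD τ v (g i) p := by
  rw [DD_eq_of_hasF hp (HasFDerivWithinAt.fun_sum (fun i _ => DD_hasF (hg i) hp)) v]
  simp [DD]

lemma DD_clm {W : Type*} [NormedAddCommGroup W] [NormedSpace ℝ W] (L : V →L[ℝ] W)
    {g : ℝ × E3 → V} (hg : ContDiffOn ℝ 1 g (SLB τ))
    {p : ℝ × E3} (hp : p ∈ SLB τ) (v : ℝ × E3) :
    DD τ v (fun q => L (g q)) p = L (DD τ v g p) := by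
  exact DD_eq_of_hasF (g := fun q => L (g q)) hp
    (L.hasFDerivAt.comp_hasFDerivWithinAt p (DD_hasF hg hp)) v

lemma DD_coord {g : ℝ × E3 → E3} (hg : ContDiffOn ℝ 1 g (SLB τ))
    {p : ℝ × E3} (hp : p ∈ SLB τ) (v : ℝ × E3) (i : Fin 3) :
    DD τ v (fun q => g q i) p = (DD τ v g p) i :=
  DD_clm (EuclideanSpace.proj i : E3 →L[ℝ] ℝ) hg hp v

end

section
variable {V : Type} [NormedAddCommGroup V] [NormedSpace ℝ V] [CompleteSpace V] {τ : ℝ}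

lemma param_fd {F : ℝ × E3 → E3 → V}
    (hF : ContDiffOn ℝ 1 (Function.uncurry F) (SLB τ ×ˢ univ)) {p : ℝ × E3} (hp : p ∈ SLB τ)
    (ξ : E3) : HasFDerivWithinAt (fun q => F q ξ)
      ((fderivWithin ℝ (Function.uncurry F) (SLB τ ×ˢ univ) (p, ξ)).comp
        (ContinuousLinearMap.inl ℝ (ℝ × E3) E3)) (SLB τ) p := by
  have h1 := ((hF.differentiableOn (by norm_num)) (p, ξ) ⟨hp, mem_univ _⟩).hasFDerivWithinAt
  have h2 : HasFDerivWithinAt (fun s : ℝ × E3 => (s, ξ)) (ContinuousLinearMap.inl ℝ (ℝ × E3) E3)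
    (SLB τ) p := (hasFDerivAt_prodMk_left p ξ).hasFDerivWithinAt
  have hm : MapsTo (fun s : ℝ × E3 => (s, ξ)) (SLB τ) (SLB τ ×ˢ univ) :=
    fun y hy => ⟨hy, mem_univ _⟩
  exact h1.comp p h2 hm

lemma param_eq {F : ℝ × E3 → E3 → V}
    (hF : ContDiffOn ℝ 1 (Function.uncurry F) (SLB τ ×ˢ univ)) {p : ℝ × E3} (hp : p ∈ SLB τ)
    (ξ : E3) : fderivWithin ℝ (fun q => F q ξ) (SLB τ) p =
      ((fderivWithin ℝ (Function.uncurry F) (SLB τ ×ˢ univ) (p, ξ)).comp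
        (ContinuousLinearMap.inl ℝ (ℝ × E3) E3)) :=
  (param_fd hF hp ξ).fderivWithin (SLB_uniq τ p hp)

lemma STU (τ : ℝ) : UniqueDiffOn ℝ (SLB τ ×ˢ (univ : Set E3)) := (SLB_uniq τ).prod uniqueDiffOn_univ

lemma param_reg {n m : WithTop ℕ∞} (hmn : m + 1 ≤ n) {F : ℝ × E3 → E3 → V}
    (hF : ContDiffOn ℝ n (Function.uncurry F) (SLB τ ×ˢ univ)) :
    ContDiffOn ℝ m (Function.uncurry (fun p ξ => fderivWithin ℝ (fun q => F q ξ) (SLB τ) p))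
      (SLB τ ×ˢ univ) := by
  have h := hF.fderivWithin (STU τ) hmn
  have h2 := h.clm_comp (contDiffOn_const (c := ContinuousLinearMap.inl ℝ (ℝ × E3) E3))
  refine h2.congr ?_
  rintro ⟨p, ξ⟩ ⟨hp, -⟩
  exact param_eq (hF.of_le (le_trans (by simp) hmn)) hp ξ

lemma param_zero {F : ℝ × E3 → E3 → V} {r : ℝ}
    (h0 : ∀ p ∈ SLB τ, ∀ ξ, r < ‖ξ‖ → F p ξ = 0) :
    ∀ p ∈ SLB τ, ∀ ξ, r < ‖ξ‖ → fderivWithin ℝ (fun q => F q ξ) (SLB τ) p = 0 := by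
  intro p hp ξ hξ
  rw [fderivWithin_congr (f₁ := fun q => F q ξ) (f := fun _ => (0 : V)) (fun q hq => h0 q hq ξ hξ)
    (h0 p hp ξ hξ)]
  simp

lemma param_hasF {F : ℝ × E3 → E3 → V} {r : ℝ}
    (hF : ContDiffOn ℝ 1 (Function.uncurry F) (SLB τ ×ˢ univ))
    (h0 : ∀ p ∈ SLB τ, ∀ ξ, r < ‖ξ‖ → F p ξ = 0) {p : ℝ × E3} (hp : p ∈ SLB τ) :
    HasFDerivWithinAt (fun q => ∫ ξ, F q ξ)
      (∫ ξ, fderivWithin ℝ (fun q => F q ξ) (SLB τ) p) (SLB τ) p := by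
  have hc := (param_reg (m := 0) (by norm_num) hF).continuousOn
  refine hasFDerivWithinAt_param (SLB_convex τ) hF.continuousOn hc ?_ h0 (param_zero h0) hp
  intro p hp ξ
  exact (param_fd hF hp ξ).differentiableWithinAt.hasFDerivWithinAt

lemma param_DD {F : ℝ × E3 → E3 → V} {r : ℝ}
    (hF : ContDiffOn ℝ 1 (Function.uncurry F) (SLB τ ×ˢ univ))
    (h0 : ∀ p ∈ SLB τ, ∀ ξ, r < ‖ξ‖ → F p ξ = 0) {p : ℝ × E3} (hp : p ∈ SLB τ) (v : ℝ × E3) :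
    DD τ v (fun q => ∫ ξ, F q ξ) p = ∫ ξ, DD τ v (fun q => F q ξ) p := by
  have hc := (param_reg (m := 0) (by norm_num) hF).continuousOn
  rw [DD_eq_of_hasF hp (param_hasF hF h0 hp), ContinuousLinearMap.integral_apply]
  · rfl
  · exact integrable_of_cont_supp (slice_cont hc hp) (param_zero h0 p hp)

lemma param_C1 {F : ℝ × E3 → E3 → V} {r : ℝ}
    (hF : ContDiffOn ℝ 1 (Function.uncurry F) (SLB τ ×ˢ univ))
    (h0 : ∀ p ∈ SLB τ, ∀ ξ, r < ‖ξ‖ → F p ξ = 0) :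
    ContDiffOn ℝ 1 (fun q => ∫ ξ, F q ξ) (SLB τ) := by
  have hc := (param_reg (m := 0) (by norm_num) hF).continuousOn
  rw [show (1 : WithTop ℕ∞) = 0 + 1 by norm_num,
    contDiffOn_succ_iff_hasFDerivWithinAt_of_uniqueDiffOn (SLB_uniq τ)]
  refine ⟨by simp, _, ?_, fun p hp => param_hasF hF h0 hp⟩
  rw [contDiffOn_zero]
  exact cont_param hc (param_zero h0)

lemma param_C2 {F : ℝ × E3 → E3 → V} {r : ℝ}
    (hF : ContDiffOn ℝ 2 (Function.uncurry F) (SLB τ ×ˢ univ))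
    (h0 : ∀ p ∈ SLB τ, ∀ ξ, r < ‖ξ‖ → F p ξ = 0) :
    ContDiffOn ℝ 2 (fun q => ∫ ξ, F q ξ) (SLB τ) := by
  have hc := param_reg (m := 1) (by norm_num) hF
  rw [show (2 : WithTop ℕ∞) = 1 + 1 by norm_num,
    contDiffOn_succ_iff_hasFDerivWithinAt_of_uniqueDiffOn (SLB_uniq τ)]
  refine ⟨by simp, _, ?_, fun p hp => param_hasF (hF.of_le (by norm_num)) h0 hp⟩
  exact param_C1 hc (param_zero h0)

lemma param_DDreg {F : ℝ × E3 → E3 → V} 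
    (hF : ContDiffOn ℝ 2 (Function.uncurry F) (SLB τ ×ˢ univ)) (v : ℝ × E3) :
    ContDiffOn ℝ 1 (Function.uncurry (fun p ξ => DD τ v (fun q => F q ξ) p)) (SLB τ ×ˢ univ) :=
  (param_reg (by norm_num) hF).clm_apply contDiffOn_const

lemma param_DDcont {F : ℝ × E3 → E3 → V} 
    (hF : ContDiffOn ℝ 1 (Function.uncurry F) (SLB τ ×ˢ univ)) (v : ℝ × E3) :
    ContinuousOn (Function.uncurry (fun p ξ => DD τ v (fun q => F q ξ) p)) (SLB τ ×ˢ univ) :=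
  ((param_reg (m := 0) (by norm_num) hF).clm_apply contDiffOn_const).continuousOn

lemma param_DDzero {F : ℝ × E3 → E3 → V} {r : ℝ}
    (h0 : ∀ p ∈ SLB τ, ∀ ξ, r < ‖ξ‖ → F p ξ = 0) (v : ℝ × E3) :
    ∀ p ∈ SLB τ, ∀ ξ, r < ‖ξ‖ → DD τ v (fun q => F q ξ) p = 0 := by
  intro p hp ξ hξ
  rw [DD, param_zero h0 p hp ξ hξ]; rfl
end


lemma intg {b ψ : E3 → ℝ} {R : ℝ} (hb : Continuous b) (hψ : Continuous ψ)
    (h0 : ∀ x, R < ‖x‖ → ψ x = 0) : Integrable (fun x => b x * ψ x) :=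
  integrable_of_cont_supp (r := R) (hb.mul hψ) (fun x hx => by simp [h0 x hx])

lemma fderiv_zero_out {ψ : E3 → ℝ} {R : ℝ} (h0 : ∀ x, R < ‖x‖ → ψ x = 0) (v : E3) :
    ∀ x, R < ‖x‖ → fderiv ℝ ψ x v = 0 := by
  intro x hx
  have : ψ =ᶠ[𝓝 x] fun _ => (0 : ℝ) := by
    filter_upwards [(isOpen_lt continuous_const continuous_norm).mem_nhds hx] with y hy
    exact h0 y hy
  rw [this.fderiv_eq]; simp

lemma fderiv_cont {b : E3 → ℝ} (hb : ContDiff ℝ 1 b) (v : E3) :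
    Continuous (fun x => fderiv ℝ b x v) :=
  (hb.continuous_fderiv (by norm_num)).clm_apply continuous_const

lemma ibp {b ψ : E3 → ℝ} {R : ℝ} (hb : ContDiff ℝ 1 b) (hψ : ContDiff ℝ 1 ψ)
    (h0 : ∀ x, R < ‖x‖ → ψ x = 0) (v : E3) :
    ∫ x, fderiv ℝ b x v * ψ x = - ∫ x, b x * fderiv ℝ ψ x v := by
  rw [integral_mul_fderiv_eq_neg_fderiv_mul_of_integrable, neg_neg]
  · exact intg (fderiv_cont hb v) hψ.continuous h0
  · exact intg hb.continuous (fderiv_cont hψ v) (fderiv_zero_out h0 v)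
  · exact intg hb.continuous hψ.continuous h0
  · exact fun x _ => hb.differentiable (by norm_num) x
  · exact fun x _ => hψ.differentiable (by norm_num) x

lemma swapl {b ψ : E3 → ℝ} {R : ℝ} (hb : ContDiff ℝ 1 b) (hψ : ContDiff ℝ 1 ψ)
    (h0 : ∀ x, R < ‖x‖ → ψ x = 0) (v w : E3) :
    ∫ x, fderiv ℝ b x v * fderiv ℝ ψ x w = ∫ x, fderiv ℝ b x w * fderiv ℝ ψ x v := by
  set S : Set ℝ := Icc (-1) 1
  have hS : Convex ℝ S := convex_Icc _ _
  have h0S : (0 : ℝ) ∈ S := by simp [S]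
  have hline : ∀ (x : E3) (h : ℝ) (c : ℝ), HasDerivAt (fun h : ℝ => x + (c * h) • w) (c • w) h := by
    intro x h c
    have h1 : HasDerivAt (fun h : ℝ => c * h) c h := by simpa using (hasDerivAt_id h).const_mul c
    exact (h1.smul_const w).const_add x
  have hout : ∀ p ∈ S, ∀ x : E3, R + ‖w‖ < ‖x‖ → R < ‖x + (1 * p) • w‖ := by
    intro p hp x hx
    have h1 : ‖(1 * p) • w‖ ≤ ‖w‖ := by
      rw [norm_smul, one_mul]
      have : ‖p‖ ≤ 1 := abs_le.2 hp
      nlinarith [norm_nonneg w]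
    have h2 := norm_sub_le (x + (1 * p) • w) ((1 * p) • w)
    rw [add_sub_cancel_right] at h2
    linarith
  have hψd : ∀ x, HasFDerivAt ψ (fderiv ℝ ψ x) x := fun x =>
    (hψ.differentiable (by norm_num) x).hasFDerivAt
  have hbd : ∀ x, HasFDerivAt b (fderiv ℝ b x) x := fun x =>
    (hb.differentiable (by norm_num) x).hasFDerivAt
  have cψ := fderiv_cont hψ
  have cb := fderiv_cont hb
  have cψ0 := hψ.continuous
  have cb0 := hb.continuous
  have d1 : HasDerivWithinAt (fun h : ℝ => ∫ x, fderiv ℝ b x v * ψ (x + (1 * h) • w))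
      (∫ x, fderiv ℝ b x v * fderiv ℝ ψ (x + (1 * (0:ℝ)) • w) w) S 0 := by
    refine hasDerivWithinAt_param (F := fun h x => fderiv ℝ b x v * ψ (x + (1 * h) • w))
      (F' := fun h x => fderiv ℝ b x v * fderiv ℝ ψ (x + (1 * h) • w) w)
      (r := R + ‖w‖) hS ?_ ?_ ?_ ?_ ?_ h0S
    · apply Continuous.continuousOn
      exact ((cb v).comp continuous_snd).mul (cψ0.comp (by fun_prop))
    · apply Continuous.continuousOn
      exact ((cb v).comp continuous_snd).mul ((cψ w).comp
        (f := fun p : ℝ × E3 => p.2 + (1 * p.1) • w) (by fun_prop))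
    · intro h _ x
      have := ((hψd (x + (1 * h) • w)).comp_hasDerivAt h (hline x h 1)).const_mul (fderiv ℝ b x v)
      simp only [one_smul] at this
      exact this.hasDerivWithinAt
    · intro p hp x hx
      simp only [h0 _ (hout p hp x hx), mul_zero]
    · intro p hp x hx
      simp only [fderiv_zero_out h0 w _ (hout p hp x hx), mul_zero]
  have d2 : HasDerivWithinAt (fun h : ℝ => ∫ x, b (x + ((-1) * h) • w) * fderiv ℝ ψ x v)
      (∫ x, (fderiv ℝ b (x + ((-1) * (0:ℝ)) • w) ((-1 : ℝ) • w)) * fderiv ℝ ψ x v) S 0 := by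
    refine hasDerivWithinAt_param (F := fun h x => b (x + ((-1) * h) • w) * fderiv ℝ ψ x v)
      (F' := fun h x => (fderiv ℝ b (x + ((-1) * h) • w) ((-1 : ℝ) • w)) * fderiv ℝ ψ x v)
      (r := R) hS ?_ ?_ ?_ ?_ ?_ h0S
    · apply Continuous.continuousOn
      exact (cb0.comp (by fun_prop)).mul ((cψ v).comp continuous_snd)
    · apply Continuous.continuousOn
      exact ((cb _).comp
        (f := fun p : ℝ × E3 => p.2 + ((-1) * p.1) • w) (by fun_prop)).mul
        ((cψ v).comp continuous_snd)
    · intro h _ x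
      have := ((hbd (x + ((-1) * h) • w)).comp_hasDerivAt h (hline x h (-1))).mul_const
        (fderiv ℝ ψ x v)
      exact this.hasDerivWithinAt
    · intro p hp x hx
      simp only [fderiv_zero_out h0 v x hx, mul_zero]
    · intro p hp x hx
      simp only [fderiv_zero_out h0 v x hx, mul_zero]
  have heq : ∀ h ∈ S, (∫ x, fderiv ℝ b x v * ψ (x + (1 * h) • w))
      = - ∫ x, b (x + ((-1) * h) • w) * fderiv ℝ ψ x v := by
    intro h hh
    have hc : ContDiff ℝ 1 (fun x => ψ (x + (1 * h) • w)) := hψ.comp (by fun_prop)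
    rw [ibp hb hc (R := R + ‖w‖) (fun x hx => h0 _ (hout h hh x hx))]
    congr 1
    rw [← integral_add_right_eq_self (fun x => b (x + ((-1) * h) • w) * fderiv ℝ ψ x v)
      ((1 * h) • w)]
    congr 1
    funext x
    rw [fderiv_comp_add_right, add_assoc, ← add_smul]
    simp
  have d3 := (d2.neg).congr heq (heq 0 h0S)
  have hu : UniqueDiffWithinAt ℝ S 0 := uniqueDiffOn_Icc (by norm_num) 0 h0S
  have := hu.eq_deriv _ d1 d3
  simpa [integral_neg] using this


/-- Electric field components. -/
def Ef (τ : ℝ) (φ : ℝ × E3 → ℝ) (a : Fin 3 → ℝ × E3 → ℝ) (i : Fin 3) (p : ℝ × E3) : ℝ :=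
  - DD τ eT (a i) p - DD τ (eX i) φ p

/-- Lorenz gauge quantity. -/
def Gf (τ : ℝ) (φ : ℝ × E3 → ℝ) (a : Fin 3 → ℝ × E3 → ℝ) (p : ℝ × E3) : ℝ :=
  DD τ eT φ p + ∑ i, DD τ (eX i) (a i) p

/-- The potential system. -/
structure GSys (τ : ℝ) (φ ρ : ℝ × E3 → ℝ) (a j : Fin 3 → ℝ × E3 → ℝ) : Prop where
  hτ : 0 < τ
  hφ : ContDiffOn ℝ 2 φ (SLB τ)
  ha : ∀ i, ContDiffOn ℝ 2 (a i) (SLB τ)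
  hρ : ContDiffOn ℝ 1 ρ (SLB τ)
  hj : ∀ i, ContDiffOn ℝ 1 (j i) (SLB τ)
  wφ : ∀ t ∈ Ioo 0 τ, ∀ x : E3, DD τ eT (DD τ eT φ) (t, x)
    - ∑ k, DD τ (eX k) (DD τ (eX k) φ) (t, x) = ρ (t, x)
  wa : ∀ i, ∀ t ∈ Ioo 0 τ, ∀ x : E3, DD τ eT (DD τ eT (a i)) (t, x)
    - ∑ k, DD τ (eX k) (DD τ (eX k) (a i)) (t, x) = j i (t, x)
  cons : ∀ t ∈ Ioo 0 τ, ∀ x : E3, DD τ eT ρ (t, x) + ∑ k, DD τ (eX k) (j k) (t, x) = 0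
  G0 : ∀ x : E3, Gf τ φ a (0, x) = 0
  E0 : ∀ x : E3, ∑ i, DD τ (eX i) (Ef τ φ a i) (0, x) = ρ (0, x)

section
variable {τ : ℝ} {φ ρ : ℝ × E3 → ℝ} {a j : Fin 3 → ℝ × E3 → ℝ}

lemma GSys.Gf1 (H : GSys τ φ ρ a j) : ContDiffOn ℝ 1 (Gf τ φ a) (SLB τ) :=
  (DD_contDiffOn1 H.hφ eT).add (ContDiffOn.sum fun i _ => DD_contDiffOn1 (H.ha i) (eX i))

lemma GSys.Ef1 (H : GSys τ φ ρ a j) (i : Fin 3) : ContDiffOn ℝ 1 (Ef τ φ a i) (SLB τ) :=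
  ((DD_contDiffOn1 (H.ha i) eT).neg).sub (DD_contDiffOn1 H.hφ (eX i))

lemma GSys.DDGf (H : GSys τ φ ρ a j) {p : ℝ × E3} (hp : p ∈ SLB τ) (v : ℝ × E3) :
    DD τ v (Gf τ φ a) p = DD τ v (DD τ eT φ) p + ∑ i, DD τ v (DD τ (eX i) (a i)) p := by
  have := DD_add (g := DD τ eT φ) (h := fun q => ∑ i, DD τ (eX i) (a i) q)
    (DD_contDiffOn1 H.hφ eT) (ContDiffOn.sum fun i _ => DD_contDiffOn1 (H.ha i) (eX i)) hp v
  rw [DD_sum (fun i => DD_contDiffOn1 (H.ha i) (eX i)) hp] at this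
  exact this

lemma GSys.DDEf (H : GSys τ φ ρ a j) (i : Fin 3) {p : ℝ × E3} (hp : p ∈ SLB τ) (v : ℝ × E3) :
    DD τ v (Ef τ φ a i) p = - DD τ v (DD τ eT (a i)) p - DD τ v (DD τ (eX i) φ) p := by
  have := DD_sub (g := fun q => - DD τ eT (a i) q) (h := DD τ (eX i) φ)
    (DD_contDiffOn1 (H.ha i) eT).neg (DD_contDiffOn1 H.hφ (eX i)) hp v
  rw [DD_neg (DD_contDiffOn1 (H.ha i) eT) hp] at this
  exact this

lemma GSys.dtE (H : GSys τ φ ρ a j) (i : Fin 3) {t : ℝ} (ht : t ∈ Ioo 0 τ) (x : E3) :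
    DD τ eT (Ef τ φ a i) (t, x) = - j i (t, x) - ∑ k, DD τ (eX k) (DD τ (eX k) (a i)) (t, x)
      - DD τ (eX i) (Gf τ φ a) (t, x) + ∑ k, DD τ (eX i) (DD τ (eX k) (a k)) (t, x) := by
  have hp : (t, x) ∈ SLB τ := mem_SLB (Ioo_subset_Ico_self ht)
  rw [H.DDEf i hp, H.DDGf hp, DD_comm H.hτ H.hφ eT (eX i) hp]
  linarith [H.wa i t ht x]

lemma GSys.dtG (H : GSys τ φ ρ a j) {t : ℝ} (ht : t ∈ Ioo 0 τ) (x : E3) :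
    DD τ eT (Gf τ φ a) (t, x) = ρ (t, x) - ∑ i, DD τ (eX i) (Ef τ φ a i) (t, x) := by
  have hp : (t, x) ∈ SLB τ := mem_SLB (Ioo_subset_Ico_self ht)
  have h1 : ∀ i, DD τ (eX i) (Ef τ φ a i) (t, x)
      = - DD τ eT (DD τ (eX i) (a i)) (t, x) - DD τ (eX i) (DD τ (eX i) φ) (t, x) := by
    intro i
    rw [H.DDEf i hp, DD_comm H.hτ (H.ha i) eT (eX i) hp]
  rw [H.DDGf hp]
  simp only [h1, Finset.sum_sub_distrib, Finset.sum_neg_distrib]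
  linarith [H.wφ t ht x]

lemma exists_W (H : GSys τ φ ρ a j) {T : ℝ} (hT0 : 0 ≤ T) (hT : T < τ) (i : Fin 3) :
    ∃ W : ℝ → E3 → ℝ, Continuous (Function.uncurry W) ∧ (∀ x, W 0 x = 0) ∧
      ∀ t ∈ Ico 0 T, ∀ x, HasDerivAt (fun s => W s x) (DD τ (eX i) (Gf τ φ a) (t, x)) t := by
  set g : ℝ × E3 → ℝ := fun p => DD τ (eX i) (Gf τ φ a) (max 0 (min p.1 T), p.2) with hg
  have hgc : Continuous g := by
    have h1 := DD_contOn H.Gf1 (eX i)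
    apply h1.comp_continuous (f := fun p : ℝ × E3 => (max 0 (min p.1 T), p.2)) (by fun_prop)
    intro p
    refine mem_SLB ⟨le_max_left _ _, ?_⟩
    exact max_lt H.hτ ((min_le_right _ _).trans_lt hT)
  refine ⟨fun t x => ∫ s in (0:ℝ)..t, g (s, x), ?_, ?_, ?_⟩
  · have := intervalIntegral.continuous_parametric_intervalIntegral_of_continuous
      (f := fun (q : ℝ × E3) (s : ℝ) => g (s, q.2)) (a₀ := 0) (s := fun q => q.1) (μ := volume)
      (by apply hgc.comp; fun_prop) continuous_fst
    exact this
  · intro x; simp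
  · intro t ht x
    have hc : Continuous (fun s => g (s, x)) := by fun_prop
    have h2 := intervalIntegral.integral_hasDerivAt_right (hc.intervalIntegrable 0 t)
      (hc.stronglyMeasurableAtFilter _ _) hc.continuousAt
    have : g (t, x) = DD τ (eX i) (Gf τ φ a) (t, x) := by
      simp only [hg]
      rw [min_eq_left ht.2.le, max_eq_right ht.1]
    rw [← this]
    exact h2

end

section
variable {τ : ℝ} {φ ρ : ℝ × E3 → ℝ} {a j : Fin 3 → ℝ × E3 → ℝ}

lemma slice_fd {g : ℝ × E3 → ℝ} (hg : ContDiffOn ℝ 1 g (SLB τ)) {t : ℝ} (ht : t ∈ Ico 0 τ)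
    (i : Fin 3) (x : E3) : DD τ (eX i) g (t, x) = fderiv ℝ (fun y => g (t, y)) x (e3 i) :=
  (slice_fderiv hg ht x (e3 i)).symm

lemma weak_zero (H : GSys τ φ ρ a j) {ψ : E3 → ℝ} {R : ℝ} (hψ : ContDiff ℝ 1 ψ)
    (h0 : ∀ x, R < ‖x‖ → ψ x = 0) {t : ℝ} (ht : t ∈ Ioo 0 τ) :
    ∫ x, (DD τ eT ρ (t, x) * ψ x + ∑ i, (DD τ eT (Ef τ φ a i) (t, x)
      + DD τ (eX i) (Gf τ φ a) (t, x)) * fderiv ℝ ψ x (e3 i)) = 0 := by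
  have ht' : t ∈ Ico 0 τ := Ioo_subset_Ico_self ht
  have hz := fun i => fderiv_zero_out h0 (e3 i)
  have cψ := fun i => fderiv_cont hψ (e3 i)
  have e1 : ∀ x, (DD τ eT ρ (t, x) * ψ x + ∑ i, (DD τ eT (Ef τ φ a i) (t, x)
      + DD τ (eX i) (Gf τ φ a) (t, x)) * fderiv ℝ ψ x (e3 i)) =
      ∑ i, (((∑ k, (DD τ (eX i) (DD τ (eX k) (a k)) (t, x) * fderiv ℝ ψ x (e3 i)
        - DD τ (eX k) (DD τ (eX k) (a i)) (t, x) * fderiv ℝ ψ x (e3 i)))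
        - DD τ (eX i) (j i) (t, x) * ψ x) - j i (t, x) * fderiv ℝ ψ x (e3 i)) := by
    intro x
    rw [eq_neg_of_add_eq_zero_left (H.cons t ht x)]
    simp only [H.dtE _ ht, Fin.sum_univ_three]
    ring
  simp only [e1]
  have cj : ∀ i, Continuous (fun x => j i (t, x)) := fun i =>
    slice_contX (H.hj i).continuousOn ht'
  have cdj : ∀ i, Continuous (fun x => DD τ (eX i) (j i) (t, x)) := fun i =>
    slice_contX (DD_contOn (H.hj i) _) ht'
  have cda : ∀ i k l, Continuous (fun x => DD τ (eX i) (DD τ (eX k) (a l)) (t, x)) :=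
    fun i k l => slice_contX (DD_contOn (DD_contDiffOn1 (H.ha l) _) _) ht'
  have i1 : ∀ i k l m, Integrable (fun x => DD τ (eX i) (DD τ (eX k) (a l)) (t, x)
      * fderiv ℝ ψ x (e3 m)) := fun i k l m => intg (cda i k l) (cψ m) (hz m)
  have i2 : ∀ i, Integrable (fun x => DD τ (eX i) (j i) (t, x) * ψ x) := fun i =>
    intg (cdj i) hψ.continuous h0
  have i3 : ∀ i, Integrable (fun x => j i (t, x) * fderiv ℝ ψ x (e3 i)) := fun i =>
    intg (cj i) (cψ i) (hz i)
  have i4 : ∀ i k, Integrable (fun x => DD τ (eX i) (DD τ (eX k) (a k)) (t, x)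
      * fderiv ℝ ψ x (e3 i) - DD τ (eX k) (DD τ (eX k) (a i)) (t, x) * fderiv ℝ ψ x (e3 i)) :=
    fun i k => (i1 _ _ _ _).sub (i1 _ _ _ _)
  have i5 : ∀ i, Integrable (fun x => ∑ k, (DD τ (eX i) (DD τ (eX k) (a k)) (t, x)
      * fderiv ℝ ψ x (e3 i) - DD τ (eX k) (DD τ (eX k) (a i)) (t, x) * fderiv ℝ ψ x (e3 i))) :=
    fun i => integrable_finsetSum _ (fun k _ => i4 i k)
  have i6 : ∀ i, Integrable (fun x => (∑ k, (DD τ (eX i) (DD τ (eX k) (a k)) (t, x)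
      * fderiv ℝ ψ x (e3 i) - DD τ (eX k) (DD τ (eX k) (a i)) (t, x) * fderiv ℝ ψ x (e3 i)))
      - DD τ (eX i) (j i) (t, x) * ψ x) := fun i => (i5 i).sub (i2 i)
  have i7 : ∀ i, Integrable (fun x => ((∑ k, (DD τ (eX i) (DD τ (eX k) (a k)) (t, x)
      * fderiv ℝ ψ x (e3 i) - DD τ (eX k) (DD τ (eX k) (a i)) (t, x) * fderiv ℝ ψ x (e3 i)))
      - DD τ (eX i) (j i) (t, x) * ψ x) - j i (t, x) * fderiv ℝ ψ x (e3 i)) :=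
    fun i => (i6 i).sub (i3 i)
  rw [integral_finsetSum _ (fun i _ => i7 i)]
  have e2 : ∀ i, ∫ x, DD τ (eX i) (j i) (t, x) * ψ x
      = - ∫ x, j i (t, x) * fderiv ℝ ψ x (e3 i) := by
    intro i
    simp only [slice_fd (H.hj i) ht' i]
    exact ibp (slice_contDiff (H.hj i) ht') hψ h0 (e3 i)
  have e3' : ∀ i k, ∫ x, DD τ (eX k) (DD τ (eX k) (a i)) (t, x) * fderiv ℝ ψ x (e3 i)
      = ∫ x, DD τ (eX k) (DD τ (eX i) (a i)) (t, x) * fderiv ℝ ψ x (e3 k) := by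
    intro i k
    have hd := DD_contDiffOn1 (H.ha i) (eX k)
    have : ∀ x, DD τ (eX k) (DD τ (eX i) (a i)) (t, x) = DD τ (eX i) (DD τ (eX k) (a i)) (t, x) :=
      fun x => DD_comm H.hτ (H.ha i) _ _ (mem_SLB ht')
    simp only [this]
    simp only [slice_fd hd ht']
    exact swapl (slice_contDiff hd ht') hψ h0 _ _
  have e4 : ∀ i, ∫ x, (((∑ k, (DD τ (eX i) (DD τ (eX k) (a k)) (t, x) * fderiv ℝ ψ x (e3 i)
        - DD τ (eX k) (DD τ (eX k) (a i)) (t, x) * fderiv ℝ ψ x (e3 i)))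
        - DD τ (eX i) (j i) (t, x) * ψ x) - j i (t, x) * fderiv ℝ ψ x (e3 i))
      = ∑ k, ((∫ x, DD τ (eX i) (DD τ (eX k) (a k)) (t, x) * fderiv ℝ ψ x (e3 i))
        - ∫ x, DD τ (eX k) (DD τ (eX i) (a i)) (t, x) * fderiv ℝ ψ x (e3 k)) := by
    intro i
    rw [integral_sub (i6 i) (i3 i), integral_sub (i5 i) (i2 i), e2,
      integral_finsetSum _ (fun k _ => i4 i k), sub_neg_eq_add, add_sub_cancel_right]
    refine Finset.sum_congr rfl fun k _ => ?_
    rw [integral_sub (i1 _ _ _ _) (i1 _ _ _ _), e3']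
  rw [Finset.sum_congr rfl fun i _ => e4 i]
  simp only [Finset.sum_sub_distrib]
  rw [sub_eq_zero]
  exact Finset.sum_comm

lemma const_of_deriv_zero {T : ℝ} {f f' : ℝ → ℝ}
    (hf : ∀ t ∈ Ico 0 T, HasDerivWithinAt f (f' t) (Ico 0 T) t)
    (h0 : ∀ t ∈ Ioo 0 T, f' t ≤ 0) {t : ℝ} (ht : t ∈ Ico 0 T) : f t ≤ f 0 := by
  have : AntitoneOn f (Ico 0 T) := by
    apply antitoneOn_of_deriv_nonpos (convex_Ico 0 T)
    · exact fun s hs => (hf s hs).continuousWithinAt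
    · rw [interior_Ico]
      intro s hs
      exact ((hf s (Ioo_subset_Ico_self hs)).differentiableWithinAt).mono Ioo_subset_Ico_self
    · rw [interior_Ico]
      intro s hs
      rw [((hf s (Ioo_subset_Ico_self hs)).hasDerivAt (Ico_mem_nhds hs.1 hs.2)).deriv]
      exact h0 s hs
  exact this ⟨le_rfl, ht.1.trans_lt ht.2⟩ ht ht.1

lemma unc {T : ℝ} (hT : T ≤ τ) {g : ℝ × E3 → ℝ} (hg : ContinuousOn g (SLB τ)) :
    ContinuousOn (fun p : ℝ × E3 => g (p.1, p.2)) (Ico 0 T ×ˢ univ) :=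
  hg.mono (fun _ hp => ⟨⟨hp.1.1, hp.1.2.trans_le hT⟩, mem_univ _⟩)

lemma weak_form (H : GSys τ φ ρ a j) {ψ : E3 → ℝ} {R T : ℝ} (hψ : ContDiff ℝ 1 ψ)
    (h0 : ∀ x, R < ‖x‖ → ψ x = 0) (hT : T < τ) {W : Fin 3 → ℝ → E3 → ℝ}
    (hWc : ∀ i, Continuous (Function.uncurry (W i))) (hW0 : ∀ i x, W i 0 x = 0)
    (hWd : ∀ i, ∀ t ∈ Ico 0 T, ∀ x,
      HasDerivAt (fun s => W i s x) (DD τ (eX i) (Gf τ φ a) (t, x)) t)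
    {t : ℝ} (ht : t ∈ Ioo 0 T) :
    ∫ x, (DD τ eT (Gf τ φ a) (t, x) * ψ x + ∑ i, W i t x * fderiv ℝ ψ x (e3 i)) = 0 := by
  have hz := fun i => fderiv_zero_out h0 (e3 i)
  have cψ := fun i => fderiv_cont hψ (e3 i)
  have hsub : ∀ {s}, s ∈ Ico 0 T → s ∈ Ico 0 τ := fun hs => ⟨hs.1, hs.2.trans hT⟩
  -- the functional
  set M : ℝ → ℝ := fun t => ∫ x, (ρ (t, x) * ψ x + ∑ i, (Ef τ φ a i (t, x) + W i t x)
    * fderiv ℝ ψ x (e3 i)) with hM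
  have c2 : ContinuousOn (fun p : ℝ × E3 => ψ p.2) (Ico 0 T ×ˢ univ) :=
    (hψ.continuous.comp continuous_snd).continuousOn
  have c3 : ∀ i, ContinuousOn (fun p : ℝ × E3 => fderiv ℝ ψ p.2 (e3 i)) (Ico 0 T ×ˢ univ) :=
    fun i => ((cψ i).comp continuous_snd).continuousOn
  have hMd : ∀ t ∈ Ico 0 T, HasDerivWithinAt M
      (∫ x, (DD τ eT ρ (t, x) * ψ x + ∑ i, (DD τ eT (Ef τ φ a i) (t, x)
      + DD τ (eX i) (Gf τ φ a) (t, x)) * fderiv ℝ ψ x (e3 i))) (Ico 0 T) t := by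
    intro t ht
    refine hasDerivWithinAt_param (r := R) (convex_Ico 0 T)
      (F := fun t x => (ρ (t, x) * ψ x + ∑ i, (Ef τ φ a i (t, x) + W i t x)
        * fderiv ℝ ψ x (e3 i)))
      (F' := fun t x => (DD τ eT ρ (t, x) * ψ x + ∑ i, (DD τ eT (Ef τ φ a i) (t, x)
      + DD τ (eX i) (Gf τ φ a) (t, x)) * fderiv ℝ ψ x (e3 i))) ?_ ?_ ?_ ?_ ?_ ht
    · refine ((unc hT.le H.hρ.continuousOn).mul c2).add (continuousOn_finsetSum _ fun i _ => ?_)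
      exact ((unc hT.le (H.Ef1 i).continuousOn).add (hWc i).continuousOn).mul (c3 i)
    · refine ((unc hT.le (DD_contOn H.hρ _)).mul c2).add (continuousOn_finsetSum _ fun i _ => ?_)
      exact ((unc hT.le (DD_contOn (H.Ef1 i) _)).add (unc hT.le (DD_contOn H.Gf1 _))).mul (c3 i)
    · intro s hs x
      have hm : Ico 0 T ⊆ Ico 0 τ := fun s hs => hsub hs
      refine (((slice_hasD H.hρ (hsub hs) x).mono hm).mul_const _).add
        (HasDerivWithinAt.fun_sum fun i _ => ?_)
      exact (((slice_hasD (H.Ef1 i) (hsub hs) x).mono hm).add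
        (hWd i s hs x).hasDerivWithinAt).mul_const _
    · intro s hs x hx
      simp [h0 x hx, hz _ x hx]
    · intro s hs x hx
      simp [h0 x hx, hz _ x hx]
  have key : ∀ t ∈ Ico 0 T, (∫ x, (ρ (t, x) * ψ x + ∑ i, (Ef τ φ a i (t, x) + W i t x)
    * fderiv ℝ ψ x (e3 i))) = ∫ x, ((ρ (t, x) - ∑ i, DD τ (eX i) (Ef τ φ a i) (t, x)) * ψ x 
      + ∑ i, W i t x * fderiv ℝ ψ x (e3 i)) := by
    intro t ht
    have j1 : Integrable (fun x => ρ (t, x) * ψ x) :=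
      intg (slice_contX H.hρ.continuousOn (hsub ht)) hψ.continuous h0
    have cW : ∀ i, Continuous (W i t) := fun i => (hWc i).comp (by fun_prop : Continuous (fun x : E3 => (t, x)))
    have j2 : ∀ i, Integrable (fun x => W i t x * fderiv ℝ ψ x (e3 i)) := fun i =>
      intg (cW i) (cψ i) (hz i)
    have j3 : ∀ i, Integrable (fun x => Ef τ φ a i (t, x) * fderiv ℝ ψ x (e3 i)) := fun i =>
      intg (slice_contX (H.Ef1 i).continuousOn (hsub ht)) (cψ i) (hz i)
    have j4 : ∀ i, Integrable (fun x => DD τ (eX i) (Ef τ φ a i) (t, x) * ψ x) := fun i =>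
      intg (slice_contX (DD_contOn (H.Ef1 i) _) (hsub ht)) hψ.continuous h0
    have e1 : ∀ i, ∫ x, DD τ (eX i) (Ef τ φ a i) (t, x) * ψ x
        = - ∫ x, Ef τ φ a i (t, x) * fderiv ℝ ψ x (e3 i) := by
      intro i
      simp only [slice_fd (H.Ef1 i) (hsub ht) i]
      exact ibp (slice_contDiff (H.Ef1 i) (hsub ht)) hψ h0 (e3 i)
    have j6 : ∀ i, Integrable (fun x => Ef τ φ a i (t, x) * fderiv ℝ ψ x (e3 i)
        + W i t x * fderiv ℝ ψ x (e3 i)) := fun i => (j3 i).add (j2 i)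
    have l1 : (∫ x, (ρ (t, x) * ψ x + ∑ i, (Ef τ φ a i (t, x) + W i t x)
        * fderiv ℝ ψ x (e3 i))) = (∫ x, ρ (t, x) * ψ x)
        + ∑ i, ((∫ x, Ef τ φ a i (t, x) * fderiv ℝ ψ x (e3 i))
          + ∫ x, W i t x * fderiv ℝ ψ x (e3 i)) := by
      simp only [add_mul]
      rw [integral_add j1 (integrable_finsetSum _ fun i _ => j6 i),
        integral_finsetSum _ (fun i _ => j6 i)]
      congr 1
      exact Finset.sum_congr rfl fun i _ => integral_add (j3 i) (j2 i)
    have j5 : Integrable (fun x => ρ (t, x) * ψ x - ∑ i, DD τ (eX i) (Ef τ φ a i) (t, x) * ψ x) :=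
      j1.sub (integrable_finsetSum _ fun i _ => j4 i)
    rw [l1]
    simp only [sub_mul, Finset.sum_mul]
    rw [integral_add j5 (integrable_finsetSum _ fun i _ => j2 i),
      integral_sub j1 (integrable_finsetSum _ fun i _ => j4 i),
      integral_finsetSum _ (fun i _ => j4 i), integral_finsetSum _ (fun i _ => j2 i)]
    simp only [e1, Finset.sum_add_distrib, Finset.sum_neg_distrib]
    ring
  have hT0 : (0 : ℝ) ∈ Ico 0 T := ⟨le_rfl, ht.1.trans ht.2⟩
  have ht' : t ∈ Ico 0 T := Ioo_subset_Ico_self ht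
  have hM0 : M 0 = 0 := by
    simp only [hM]
    rw [key 0 hT0]
    simp [H.E0, hW0]
  have hle := const_of_deriv_zero hMd
    (fun s hs => (weak_zero H hψ h0 ⟨hs.1, hs.2.trans hT⟩).le) ht'
  have hge := const_of_deriv_zero (fun s hs => (hMd s hs).neg)
    (fun s hs => by rw [weak_zero H hψ h0 ⟨hs.1, hs.2.trans hT⟩, neg_zero]) ht'
  have hMt : M t = 0 := by
    simp only [Pi.neg_apply] at hge
    linarith
  simp only [H.dtG ⟨ht.1, ht.2.trans hT⟩]
  rw [← key t ht']
  exact hMt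
end

/-- cutoff -/
def chi (R t : ℝ) (x : E3) : ℝ := expNegInvGlue (R - t - √(1 + ‖x‖ ^ 2))
/-- derivative of the cutoff -/
def chi' (R t : ℝ) (x : E3) : ℝ := deriv expNegInvGlue (R - t - √(1 + ‖x‖ ^ 2))

lemma glue_hd (y : ℝ) : HasDerivAt expNegInvGlue (deriv expNegInvGlue y) y :=
  ((expNegInvGlue.contDiff (n := 1)).differentiable (by norm_num) y).hasDerivAt

lemma glue_dc : Continuous (deriv expNegInvGlue) :=
  (expNegInvGlue.contDiff (n := 1)).continuous_deriv le_rfl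

lemma glue_mono : Monotone expNegInvGlue := by
  intro x y hxy
  by_cases h1 : x ≤ 0
  · rw [expNegInvGlue.zero_of_nonpos h1]
    exact expNegInvGlue.nonneg y
  · have h2 : ¬ y ≤ 0 := fun h => h1 (hxy.trans h)
    unfold expNegInvGlue
    rw [if_neg h1, if_neg h2]
    apply Real.exp_le_exp.2
    rw [neg_le_neg_iff]
    exact inv_anti₀ (not_le.1 h1) hxy

lemma chi'_nonneg (R t : ℝ) (x : E3) : 0 ≤ chi' R t x := glue_mono.deriv_nonneg

lemma sq_ne (x : E3) : 1 + ‖x‖ ^ 2 ≠ 0 := by positivity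

lemma arg_neg {R t : ℝ} (ht : 0 ≤ t) {x : E3} (hx : R < ‖x‖) : R - t - √(1 + ‖x‖ ^ 2) < 0 := by
  have : ‖x‖ ≤ √(1 + ‖x‖ ^ 2) := Real.le_sqrt_of_sq_le (by linarith)
  linarith

lemma chi_zero {R t : ℝ} (ht : 0 ≤ t) {x : E3} (hx : R < ‖x‖) : chi R t x = 0 :=
  expNegInvGlue.zero_of_nonpos (arg_neg ht hx).le

lemma chi'_zero {R t : ℝ} (ht : 0 ≤ t) {x : E3} (hx : R < ‖x‖) : chi' R t x = 0 := by
  unfold chi'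
  have h := arg_neg ht hx
  have : expNegInvGlue =ᶠ[𝓝 (R - t - √(1 + ‖x‖ ^ 2))] fun _ => (0 : ℝ) := by
    filter_upwards [Iio_mem_nhds h] with y hy
    exact expNegInvGlue.zero_of_nonpos (le_of_lt hy)
  rw [this.deriv_eq, deriv_const]

lemma chi_cont (R : ℝ) : Continuous (fun p : ℝ × E3 => chi R p.1 p.2) := by
  unfold chi
  exact (expNegInvGlue.contDiff (n := 0)).continuous.comp (by fun_prop)

lemma chi'_cont (R : ℝ) : Continuous (fun p : ℝ × E3 => chi' R p.1 p.2) := by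
  unfold chi'
  exact glue_dc.comp (by fun_prop)

lemma chi_dt (R t : ℝ) (x : E3) : HasDerivAt (fun s => chi R s x) (- chi' R t x) t := by
  have h1 : HasDerivAt (fun s : ℝ => R - s - √(1 + ‖x‖ ^ 2)) (-1) t := by
    simpa using ((hasDerivAt_id t).const_sub R).sub_const (√(1 + ‖x‖ ^ 2))
  have := (glue_hd (R - t - √(1 + ‖x‖ ^ 2))).comp t h1
  simpa [chi', chi, Function.comp_def] using this

lemma chi_cd (R t : ℝ) : ContDiff ℝ 1 (chi R t) := by
  unfold chi
  apply (expNegInvGlue.contDiff (n := 1)).comp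
  apply ContDiff.sub contDiff_const
  apply ContDiff.sqrt
  · exact contDiff_const.add (contDiff_norm_sq ℝ)
  · exact sq_ne

lemma chi_dx (R t : ℝ) (x : E3) (i : Fin 3) :
    fderiv ℝ (chi R t) x (e3 i) = - chi' R t x * (x i / √(1 + ‖x‖ ^ 2)) := by
  have h0 : HasFDerivAt (fun y : E3 => 1 + ‖y‖ ^ 2) (2 • innerSL ℝ x) x := by
    have := (hasStrictFDerivAt_norm_sq x).hasFDerivAt.const_add 1
    exact this
  have h1 := (h0.sqrt (sq_ne x)).const_sub (R - t)
  have h2 := (glue_hd (R - t - √(1 + ‖x‖ ^ 2))).comp_hasFDerivAt x h1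
  have h3 : HasFDerivAt (chi R t) _ x := h2
  rw [h3.fderiv]
  have : inner ℝ x (e3 i) = x i := by
    unfold e3
    simp [EuclideanSpace.inner_single_right]
  simp only [smul_apply, neg_apply, innerSL_apply_apply, this,
    chi', smul_eq_mul, nsmul_eq_mul]
  field_simp
  simp

section
variable {τ : ℝ} {φ ρ : ℝ × E3 → ℝ} {a j : Fin 3 → ℝ × E3 → ℝ}

lemma nsum (x : E3) : ∑ i, (x i / √(1 + ‖x‖ ^ 2)) ^ 2 ≤ 1 := by
  simp only [div_pow]
  rw [Real.sq_sqrt (by positivity), ← Finset.sum_div, ← EuclideanSpace.real_norm_sq_eq]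
  rw [div_le_one (by positivity)]
  linarith

lemma quad (G : ℝ) (W n : Fin 3 → ℝ) (h : ∑ i, n i ^ 2 ≤ 1) :
    2 * (G * ∑ i, W i * n i) ≤ G ^ 2 + ∑ i, W i ^ 2 := by
  simp only [Fin.sum_univ_three] at *
  nlinarith [sq_nonneg (W 0 - G * n 0), sq_nonneg (W 1 - G * n 1), sq_nonneg (W 2 - G * n 2),
    mul_nonneg (sq_nonneg G) (sub_nonneg.2 h)]

theorem Gf_zero (H : GSys τ φ ρ a j) {t₀ : ℝ} (ht₀ : t₀ ∈ Ico 0 τ) (x₀ : E3) :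
    Gf τ φ a (t₀, x₀) = 0 := by
  obtain ⟨T, hT1, hT⟩ := exists_between ht₀.2
  have hT0 : 0 < T := ht₀.1.trans_lt hT1
  choose W hWc hW0 hWd using exists_W H hT0.le hT
  set R : ℝ := t₀ + √(1 + ‖x₀‖ ^ 2) + 1 with hR
  set G := Gf τ φ a with hG
  have hsub : ∀ {s}, s ∈ Ico 0 T → s ∈ Ico 0 τ := fun hs => ⟨hs.1, hs.2.trans hT⟩
  have cχ : ContinuousOn (fun p : ℝ × E3 => chi R p.1 p.2) (Ico 0 T ×ˢ univ) :=
    (chi_cont R).continuousOn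
  have cχ' : ContinuousOn (fun p : ℝ × E3 => chi' R p.1 p.2) (Ico 0 T ×ˢ univ) :=
    (chi'_cont R).continuousOn
  have cG := unc hT.le H.Gf1.continuousOn
  have cDG := fun v => unc hT.le (DD_contOn H.Gf1 v)
  have cW : ∀ i, ContinuousOn (fun p : ℝ × E3 => W i p.1 p.2) (Ico 0 T ×ˢ univ) :=
    fun i => (hWc i).continuousOn
  set F : ℝ → E3 → ℝ := fun t x => chi R t x * (G (t, x) ^ 2 + ∑ i, W i t x ^ 2) with hF
  set F' : ℝ → E3 → ℝ := fun t x => - chi' R t x * (G (t, x) ^ 2 + ∑ i, W i t x ^ 2)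
    + chi R t x * (2 * G (t, x) * DD τ eT G (t, x)
      + ∑ i, 2 * W i t x * DD τ (eX i) G (t, x)) with hF'
  have cF : ContinuousOn (Function.uncurry F) (Ico 0 T ×ˢ univ) :=
    cχ.mul ((cG.pow 2).add (continuousOn_finsetSum _ fun i _ => (cW i).pow 2))
  have cF' : ContinuousOn (Function.uncurry F') (Ico 0 T ×ˢ univ) :=
    (cχ'.neg.mul ((cG.pow 2).add (continuousOn_finsetSum _ fun i _ => (cW i).pow 2))).add
      (cχ.mul (((continuousOn_const.mul cG).mul (cDG eT)).add
        (continuousOn_finsetSum _ fun i _ => (continuousOn_const.mul (cW i)).mul (cDG (eX i)))))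
  have zF : ∀ t ∈ Ico 0 T, ∀ x, R < ‖x‖ → F t x = 0 := by
    intro t ht x hx
    simp [hF, chi_zero ht.1 hx]
  have zF' : ∀ t ∈ Ico 0 T, ∀ x, R < ‖x‖ → F' t x = 0 := by
    intro t ht x hx
    simp [hF', chi_zero ht.1 hx, chi'_zero ht.1 hx]
  have hd : ∀ t ∈ Ico 0 T, HasDerivWithinAt (fun s => ∫ x, F s x) (∫ x, F' t x) (Ico 0 T) t := by
    intro t ht
    refine hasDerivWithinAt_param (convex_Ico 0 T) cF cF' ?_ zF zF' ht
    intro s hs x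
    have hm : Ico 0 T ⊆ Ico 0 τ := fun s hs => hsub hs
    have d1 := (chi_dt R s x).hasDerivWithinAt (s := Ico 0 T)
    have d2 := ((slice_hasD H.Gf1 (hsub hs) x).mono hm).pow 2
    have d3 := HasDerivWithinAt.fun_sum (u := Finset.univ)
      fun i _ => ((hWd i s hs x).hasDerivWithinAt (s := Ico 0 T)).pow 2
    have := d1.mul (d2.add d3)
    refine this.congr_deriv ?_
    simp [hF']
    ring
  have hneg : ∀ t ∈ Ioo 0 T, ∫ x, F' t x ≤ 0 := by
    intro t ht
    have ht' : t ∈ Ico 0 T := Ioo_subset_Ico_self ht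
    have gG : ContDiff ℝ 1 (fun x => G (t, x)) := slice_contDiff H.Gf1 (hsub ht')
    have hψ : ContDiff ℝ 1 (fun x => chi R t x * G (t, x)) := (chi_cd R t).mul gG
    have hw := weak_form H hψ (R := R) (fun x hx => by simp [chi_zero ht.1.le hx]) hT hWc hW0
      hWd ht
    have fd : ∀ x i, fderiv ℝ (fun x => chi R t x * G (t, x)) x (e3 i)
        = chi R t x * DD τ (eX i) G (t, x)
          - G (t, x) * (chi' R t x * (x i / √(1 + ‖x‖ ^ 2))) := by
      intro x i
      rw [slice_fd H.Gf1 (hsub ht') i x]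
      rw [fderiv_fun_mul ((chi_cd R t).differentiable (by norm_num) x)
        (gG.differentiable (by norm_num) x)]
      simp [chi_dx]
      ring
    have cψ := fun i => fderiv_cont hψ (e3 i)
    have hz := fun i => fderiv_zero_out (ψ := fun x => chi R t x * G (t, x)) (R := R)
      (fun x hx => by simp [chi_zero ht.1.le hx]) (e3 i)
    have I2 : Integrable (fun x => DD τ eT G (t, x) * (chi R t x * G (t, x))
        + ∑ i, W i t x * fderiv ℝ (fun x => chi R t x * G (t, x)) x (e3 i)) := by
      refine (intg (R := R) (slice_contX (DD_contOn H.Gf1 _) (hsub ht')) hψ.continuous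
        (fun x hx => by simp [chi_zero ht.1.le hx])).add
        (integrable_finsetSum _ fun i _ => intg ?_ (cψ i) (hz i))
      exact (hWc i).comp (by fun_prop : Continuous (fun x : E3 => (t, x)))
    have I1 : Integrable (F' t) := integrable_of_cont_supp (slice_cont cF' ht') (zF' t ht')
    have hle : ∫ x, F' t x ≤ ∫ x, 2 * (DD τ eT G (t, x) * (chi R t x * G (t, x))
        + ∑ i, W i t x * fderiv ℝ (fun x => chi R t x * G (t, x)) x (e3 i)) := by
      refine integral_mono I1 (I2.const_mul 2) fun x => ?_
      have q := quad (G (t, x)) (fun i => W i t x) (fun i => x i / √(1 + ‖x‖ ^ 2)) (nsum x)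
      have q2 := mul_le_mul_of_nonneg_left q (chi'_nonneg R t x)
      simp only [fd, hF', Fin.sum_univ_three] at q2 ⊢
      linarith
    rw [integral_const_mul, hw] at hle
    simpa using hle
  have ht₀' : t₀ ∈ Ico 0 T := ⟨ht₀.1, hT1⟩
  have hfin := const_of_deriv_zero hd hneg ht₀'
  have h00 : ∫ x, F 0 x = 0 := by
    simp [hF, hG, H.G0, hW0]
  rw [h00] at hfin
  have nn : ∀ x, 0 ≤ F t₀ x := fun x => mul_nonneg (expNegInvGlue.nonneg _) (by positivity)
  have cFt : Continuous (F t₀) := slice_cont cF ht₀'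
  have hI : Integrable (F t₀) := integrable_of_cont_supp cFt (zF t₀ ht₀')
  have hz : ∫ x, F t₀ x = 0 := le_antisymm hfin (integral_nonneg nn)
  have hae := (integral_eq_zero_iff_of_nonneg nn hI).1 hz
  have heq := (Continuous.ae_eq_iff_eq volume cFt continuous_zero).1 hae
  have h1 : F t₀ x₀ = 0 := congrFun heq x₀
  have hpos : 0 < chi R t₀ x₀ := expNegInvGlue.pos_of_pos (by rw [hR]; linarith)
  have h2 : G (t₀, x₀) ^ 2 + ∑ i, W i t₀ x₀ ^ 2 = 0 := by
    rcases mul_eq_zero.1 h1 with h | h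
    · exact absurd h hpos.ne'
    · exact h
  have h3 : 0 ≤ ∑ i, W i t₀ x₀ ^ 2 := by positivity
  have h4 : G (t₀, x₀) ^ 2 = 0 := by nlinarith [sq_nonneg (G (t₀, x₀))]
  exact pow_eq_zero_iff (two_ne_zero) |>.1 h4
end

section
variable {τ : ℝ} {φ ρ : ℝ × E3 → ℝ} {Av Jv : ℝ × E3 → E3}

/-- components of a vector field -/
def vcp (F : ℝ × E3 → E3) (i : Fin 3) (p : ℝ × E3) : ℝ := F p i

/-- magnetic field components -/
def Bc (τ : ℝ) (a : Fin 3 → ℝ × E3 → ℝ) (k : Fin 3) (p : ℝ × E3) : ℝ :=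
  DD τ (eX (k + 1)) (a (k + 2)) p - DD τ (eX (k + 2)) (a (k + 1)) p

/-- electric field in terms of potentials -/
def EA (φ : ℝ × E3 → ℝ) (Av : ℝ × E3 → E3) (t : ℝ) (x : E3) : E3 :=
  -timeD (fun s => Av (s, x)) t - gradient (fun y => φ (t, y)) x

/-- magnetic field in terms of potentials -/
def BA (Av : ℝ × E3 → E3) (t : ℝ) (x : E3) : E3 := curl3 (fun y => Av (t, y)) x

lemma vcp_cd {n : WithTop ℕ∞} (hA : ContDiffOn ℝ n Av (SLB τ)) (i : Fin 3) :
    ContDiffOn ℝ n (vcp Av i) (SLB τ) :=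
  (EuclideanSpace.proj i : E3 →L[ℝ] ℝ).contDiff.comp_contDiffOn hA

lemma grad_coord (g : E3 → ℝ) (x : E3) (i : Fin 3) : gradient g x i = fderiv ℝ g x (e3 i) := by
  have : inner ℝ (gradient g x) (e3 i) = fderiv ℝ g x (e3 i) := by
    simp [gradient]
  have h2 : inner ℝ (gradient g x) (e3 i) = gradient g x i := by
    rw [e3, EuclideanSpace.inner_single_right]
    simp
  rw [← this, h2]

lemma curl_coord (F : E3 → E3) (x : E3) (k : Fin 3) :
    curl3 F x k = pd3 (fun y => F y (k + 2)) (k + 1) x - pd3 (fun y => F y (k + 1)) (k + 2) x := by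
  fin_cases k <;> rfl

lemma EA_coord (hφ : ContDiffOn ℝ 2 φ (SLB τ)) (hA : ContDiffOn ℝ 2 Av (SLB τ)) {t : ℝ}
    (ht : t ∈ Ico 0 τ) (x : E3) (i : Fin 3) : EA φ Av t x i = Ef τ φ (vcp Av) i (t, x) := by
  have hA1 := hA.of_le (m := 1) (by norm_num)
  have h1 : DD τ eT (vcp Av i) (t, x) = DD τ eT Av (t, x) i := DD_coord hA1 (mem_SLB ht) eT i
  have h2 := slice_fderiv (hφ.of_le (m := 1) (by norm_num)) ht x (e3 i)
  simp only [EA, Ef, PiLp.sub_apply, PiLp.neg_apply, grad_coord, slice_timeD hA1 ht, h1, h2]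
  rfl

lemma BA_coord (hA : ContDiffOn ℝ 2 Av (SLB τ)) {t : ℝ}
    (ht : t ∈ Ico 0 τ) (x : E3) (k : Fin 3) : BA Av t x k = Bc τ (vcp Av) k (t, x) := by
  have h : ∀ i k, pd3 (fun y => Av (t, y) k) i x = DD τ (eX i) (vcp Av k) (t, x) := fun i k =>
    slice_fderiv ((vcp_cd hA k).of_le (m := 1) (by norm_num)) ht x (e3 i)
  rw [BA, curl_coord, h, h, Bc]

lemma pd3_of {F : ℝ → E3 → E3} {g : Fin 3 → ℝ × E3 → ℝ} (hg : ∀ i, ContDiffOn ℝ 1 (g i) (SLB τ))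
    {t : ℝ} (ht : t ∈ Ico 0 τ) (h : ∀ x i, F t x i = g i (t, x)) (x : E3) (i k : Fin 3) :
    pd3 (fun y => F t y k) i x = DD τ (eX i) (g k) (t, x) := by
  simp only [h]
  exact slice_fderiv (hg k) ht x (e3 i)

lemma timeD_of {F : ℝ → E3 → E3} {g : Fin 3 → ℝ × E3 → ℝ} (hg : ∀ i, ContDiffOn ℝ 1 (g i) (SLB τ))
    (h : ∀ t ∈ Ico 0 τ, ∀ x i, F t x i = g i (t, x)) {t : ℝ} (ht : t ∈ Ico 0 τ) (x : E3) (i : Fin 3) :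
    timeD (fun s => F s x) t i = DD τ eT (g i) (t, x) := by
  set g' : ℝ × E3 → E3 := fun p => WithLp.toLp 2 (fun i => g i p) with hg'
  have c : ContDiffOn ℝ 1 g' (SLB τ) := by
    rw [contDiffOn_euclidean]
    exact hg
  rw [timeD_congr ht (H := fun s => g' (s, x))
    (fun s hs => by ext i; simp [hg', h s hs x i]), slice_timeD c ht, ← DD_coord c (mem_SLB ht)]

lemma Bc1 {a : Fin 3 → ℝ × E3 → ℝ} (ha : ∀ i, ContDiffOn ℝ 2 (a i) (SLB τ)) (k : Fin 3) :
    ContDiffOn ℝ 1 (Bc τ a k) (SLB τ) :=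
  (DD_contDiffOn1 (ha _) _).sub (DD_contDiffOn1 (ha _) _)

lemma DDBc {a : Fin 3 → ℝ × E3 → ℝ} (ha : ∀ i, ContDiffOn ℝ 2 (a i) (SLB τ)) (k : Fin 3)
    {p : ℝ × E3} (hp : p ∈ SLB τ) (v : ℝ × E3) :
    DD τ v (Bc τ a k) p = DD τ v (DD τ (eX (k + 1)) (a (k + 2))) p
      - DD τ v (DD τ (eX (k + 2)) (a (k + 1))) p :=
  DD_sub (DD_contDiffOn1 (ha _) _) (DD_contDiffOn1 (ha _) _) hp v

lemma f12 : (1 : Fin 3) + 2 = 0 := rfl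
lemma f11 : (1 : Fin 3) + 1 = 2 := rfl
lemma f21 : (2 : Fin 3) + 1 = 0 := rfl
lemma f22 : (2 : Fin 3) + 2 = 1 := rfl

theorem maxwell_abs (hφ : ContDiffOn ℝ 2 φ (SLB τ)) (hA : ContDiffOn ℝ 2 Av (SLB τ))
    (H : GSys τ φ ρ (vcp Av) (vcp Jv)) {t : ℝ} (ht : t ∈ Ioo 0 τ) (x : E3) :
    timeD (fun s => EA φ Av s x) t - curl3 (BA Av t) x = - Jv (t, x)
    ∧ divg (EA φ Av t) x = ρ (t, x)
    ∧ timeD (fun s => BA Av s x) t + curl3 (EA φ Av t) x = 0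
    ∧ divg (BA Av t) x = 0 := by
  have ht' : t ∈ Ico 0 τ := Ioo_subset_Ico_self ht
  have hp : (t, x) ∈ SLB τ := mem_SLB ht'
  have tE := fun i => timeD_of (F := EA φ Av) H.Ef1 (fun t ht x i => EA_coord hφ hA ht x i) ht' x i
  have tB := fun i => timeD_of (F := BA Av) (Bc1 H.ha) (fun t ht x i => BA_coord hA ht x i) ht' x i
  have pE := fun i k => pd3_of (F := EA φ Av) H.Ef1 ht' (fun x i => EA_coord hφ hA ht' x i) x i k
  have pB := fun i k => pd3_of (F := BA Av) (Bc1 H.ha) ht' (fun x i => BA_coord hA ht' x i) x i k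
  have hG : ∀ v, DD τ v (Gf τ φ (vcp Av)) (t, x) = 0 := by
    intro v
    rw [DD_congr hp v (H := fun _ => (0 : ℝ)) (fun s hs => Gf_zero H hs.1 s.2)]
    simp [DD]
  have cA := fun i v w => DD_comm H.hτ (H.ha i) v w hp
  have cφ := fun v w => DD_comm H.hτ H.hφ v w hp
  refine ⟨?_, ?_, ?_, ?_⟩
  · ext i
    have hE := H.dtE i ht x
    have hJ : Jv (t, x) i = vcp Jv i (t, x) := rfl
    rw [hG] at hE
    simp only [PiLp.sub_apply, PiLp.neg_apply, hJ, tE, curl_coord, pB, DDBc H.ha _ hp, hE,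
      Fin.sum_univ_three]
    fin_cases i
    · simp only [Fin.zero_eta, zero_add, f11, f12, f21, f22]
      rw [cA 1 (eX 0) (eX 1), cA 2 (eX 0) (eX 2)]; ring
    · simp only [Fin.mk_one, zero_add, f11, f12, f21, f22]
      rw [cA 0 (eX 1) (eX 0), cA 2 (eX 1) (eX 2)]; ring
    · simp only [Fin.reduceFinMk, zero_add, f11, f12, f21, f22]
      rw [cA 0 (eX 2) (eX 0), cA 1 (eX 2) (eX 1)]; ring
  · have hGt := H.dtG ht x
    rw [hG] at hGt
    simp only [divg, pE]
    linarith
  · ext i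
    simp only [PiLp.add_apply, tB, curl_coord, pE, DDBc H.ha _ hp, H.DDEf _ hp, PiLp.zero_apply]
    rw [cA _ eT (eX (i + 1)), cA _ eT (eX (i + 2)), cφ (eX (i + 1)) (eX (i + 2))]
    ring
  · simp only [divg, pB, DDBc H.ha _ hp, Fin.sum_univ_three, zero_add, f11, f12, f21, f22]
    rw [cA 0 (eX 1) (eX 2), cA 1 (eX 0) (eX 2), cA 2 (eX 0) (eX 1)]
    ring
end

set_option linter.unusedSectionVars false
lemma vrel_cd {n : WithTop ℕ∞} : ContDiff ℝ n vrel := by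
  have h : ContDiff ℝ n (fun ξ : E3 => (Real.sqrt (1 + ‖ξ‖ ^ 2))⁻¹) := by
    apply ContDiff.inv
    · exact ContDiff.sqrt (contDiff_const.add (contDiff_norm_sq ℝ)) sq_ne
    · intro x
      positivity
  exact h.smul contDiff_id

lemma reidx {n : WithTop ℕ∞} {τ : ℝ} {u : ℝ → E3 → E3 → ℝ}
    (h : ContDiffOn ℝ n (fun p : ℝ × E3 × E3 => u p.1 p.2.1 p.2.2)
      (Set.Ico 0 τ ×ˢ (Set.univ : Set (E3 × E3)))) :
    ContDiffOn ℝ n (Function.uncurry (fun (p : ℝ × E3) (ξ : E3) => u p.1 p.2 ξ))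
      (SLB τ ×ˢ univ) := by
  refine h.comp (g := fun p : ℝ × E3 × E3 => u p.1 p.2.1 p.2.2)
    (f := fun q : (ℝ × E3) × E3 => (q.1.1, q.1.2, q.2)) (by fun_prop) ?_
  rintro ⟨p, ξ⟩ ⟨hp, -⟩
  exact ⟨hp.1, mem_univ _⟩

lemma reidxv {n : WithTop ℕ∞} {τ : ℝ} {u : ℝ → E3 → E3 → ℝ}
    (h : ContDiffOn ℝ n (fun p : ℝ × E3 × E3 => u p.1 p.2.1 p.2.2)
      (Set.Ico 0 τ ×ˢ (Set.univ : Set (E3 × E3)))) :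
    ContDiffOn ℝ n (Function.uncurry (fun (p : ℝ × E3) (ξ : E3) => u p.1 p.2 ξ • vrel ξ))
      (SLB τ ×ˢ univ) :=
  (reidx h).smul ((vrel_cd.comp contDiff_snd).contDiffOn)

section
variable {V : Type} [NormedAddCommGroup V] [NormedSpace ℝ V] [CompleteSpace V] {τ : ℝ}

lemma conv_tt {g : ℝ × E3 → V} (hg : ContDiffOn ℝ 2 g (SLB τ)) {t : ℝ} (ht : t ∈ Ioo 0 τ) (x : E3) :
    deriv (fun s => deriv (fun s' => g (s', x)) s) t = DD τ eT (DD τ eT g) (t, x) := by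
  have h1 : (fun s => deriv (fun s' => g (s', x)) s) =ᶠ[𝓝 t] fun s => DD τ eT g (s, x) := by
    filter_upwards [Ioo_mem_nhds ht.1 ht.2] with s hs
    exact (slice_hasDerivAt (hg.of_le (by norm_num)) hs x).deriv
  rw [h1.deriv_eq]
  exact (slice_hasDerivAt (DD_contDiffOn1 hg eT) ht x).deriv

lemma conv_xx {g : ℝ × E3 → V} (hg : ContDiffOn ℝ 2 g (SLB τ)) {t : ℝ} (ht : t ∈ Ico 0 τ) (x : E3)
    (i : Fin 3) :
    fderiv ℝ (fun y => fderiv ℝ (fun z => g (t, z)) y (e3 i)) x (e3 i)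
      = DD τ (eX i) (DD τ (eX i) g) (t, x) := by
  have h1 : (fun y => fderiv ℝ (fun z => g (t, z)) y (e3 i)) = fun y => DD τ (eX i) g (t, y) := by
    funext y
    exact slice_fderiv (hg.of_le (by norm_num)) ht y (e3 i)
  rw [h1]
  exact slice_fderiv (DD_contDiffOn1 hg (eX i)) ht x (e3 i)

lemma DD2_clm {W : Type} [NormedAddCommGroup W] [NormedSpace ℝ W] (L : V →L[ℝ] W)
    {g : ℝ × E3 → V} (hg : ContDiffOn ℝ 2 g (SLB τ))
    {p : ℝ × E3} (hp : p ∈ SLB τ) (v w : ℝ × E3) :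
    DD τ v (DD τ w (fun q => L (g q))) p = L (DD τ v (DD τ w g) p) := by
  rw [DD_congr hp v (H := fun q => L (DD τ w g q))
    (fun q hq => DD_clm L (hg.of_le (by norm_num)) hq w), DD_clm L (DD_contDiffOn1 hg w) hp]

lemma param_DD2 {F : ℝ × E3 → E3 → V} {r : ℝ}
    (hF : ContDiffOn ℝ 2 (Function.uncurry F) (SLB τ ×ˢ univ))
    (h0 : ∀ p ∈ SLB τ, ∀ ξ, r < ‖ξ‖ → F p ξ = 0) {p : ℝ × E3} (hp : p ∈ SLB τ) (v w : ℝ × E3) :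
    DD τ v (DD τ w (fun q => ∫ ξ, F q ξ)) p = ∫ ξ, DD τ v (DD τ w (fun q => F q ξ)) p := by
  rw [DD_congr hp v (H := fun q => ∫ ξ, DD τ w (fun q => F q ξ) q)
    (fun q hq => param_DD (hF.of_le (by norm_num)) h0 hq w),
    param_DD (param_DDreg hF w) (param_DDzero h0 w) hp]

lemma param_int2 {F : ℝ × E3 → E3 → V} {r : ℝ}
    (hF : ContDiffOn ℝ 2 (Function.uncurry F) (SLB τ ×ˢ univ))
    (h0 : ∀ p ∈ SLB τ, ∀ ξ, r < ‖ξ‖ → F p ξ = 0) {p : ℝ × E3} (hp : p ∈ SLB τ) (v w : ℝ × E3) :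
    Integrable (fun ξ => DD τ v (DD τ w (fun q => F q ξ)) p) :=
  integrable_of_cont_supp (slice_cont (param_DDcont (param_DDreg hF w) v) hp)
    (param_DDzero (param_DDzero h0 w) v p hp)

lemma slice_xi {n : WithTop ℕ∞} {F : ℝ × E3 → E3 → V}
    (hF : ContDiffOn ℝ n (Function.uncurry F) (SLB τ ×ˢ univ)) (ξ : E3) :
    ContDiffOn ℝ n (fun q => F q ξ) (SLB τ) :=
  hF.comp (f := fun q : ℝ × E3 => (q, ξ)) (by fun_prop) (fun q hq => ⟨hq, mem_univ _⟩)

lemma param_wave {F : ℝ × E3 → E3 → V} {r : ℝ}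
    (hF : ContDiffOn ℝ 2 (Function.uncurry F) (SLB τ ×ˢ univ))
    (h0 : ∀ p ∈ SLB τ, ∀ ξ, r < ‖ξ‖ → F p ξ = 0) {p : ℝ × E3} (hp : p ∈ SLB τ) {S : E3 → V}
    (hw : ∀ ξ, DD τ eT (DD τ eT (fun q => F q ξ)) p
      - ∑ k, DD τ (eX k) (DD τ (eX k) (fun q => F q ξ)) p = S ξ) :
    DD τ eT (DD τ eT (fun q => ∫ ξ, F q ξ)) p
      - ∑ k, DD τ (eX k) (DD τ (eX k) (fun q => ∫ ξ, F q ξ)) p = ∫ ξ, S ξ := by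
  simp only [param_DD2 hF h0 hp, ← hw]
  rw [integral_sub (param_int2 hF h0 hp _ _)
    (integrable_finsetSum _ fun k _ => param_int2 hF h0 hp _ _),
    integral_finsetSum _ fun k _ => param_int2 hF h0 hp _ _]
end

/-- **Maxwell's equations from distributions of Lienard–Wiechert potentials**: with
`φ = ∫ u dξ`, `A = A⁰ + ∫ v(ξ) u dξ`, `E = -∂ₜA - ∇ₓφ` and `B = curlₓA`, the fields
`(E,B)` solve the Maxwell system with source `(ρ_f, j_f)` and initial data
`(E^in, B^in)`. -/
theorem maxwell_from_lienard_wiechert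
    (τ r : ℝ) (hτ : 0 < τ) (hr : 0 < r)
    (f u : ℝ → E3 → E3 → ℝ) (Ein AI : E3 → E3) (A0 : ℝ → E3 → E3)
    -- `f` is `C¹` on `[0,τ)×ℝ³×ℝ³`, vanishes for `|ξ| > r`, and satisfies the local
    -- conservation law `∂ₜρ_f + divₓ j_f = 0`
    (hfreg : ContDiffOn ℝ 1 (fun p : ℝ × E3 × E3 => f p.1 p.2.1 p.2.2)
      (Set.Ico 0 τ ×ˢ (Set.univ : Set (E3 × E3))))
    (hfsupp : ∀ t ∈ Set.Ico 0 τ, ∀ x ξ : E3, r < ‖ξ‖ → f t x ξ = 0)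
    (hcons : ∀ t ∈ Set.Ioo 0 τ, ∀ x : E3,
      deriv (fun s => ∫ ξ : E3, f s x ξ) t
        + divg (fun y => ∫ ξ : E3, f t y ξ • vrel ξ) x = 0)
    -- `u` is `C²` on `[0,τ)×ℝ³×ℝ³`, vanishes for `|ξ| > r`, and solves, for each fixed
    -- `ξ`, the wave equation `∂ₜ²u - Δₓu = f` with vanishing initial data
    (hureg : ContDiffOn ℝ 2 (fun p : ℝ × E3 × E3 => u p.1 p.2.1 p.2.2)
      (Set.Ico 0 τ ×ˢ (Set.univ : Set (E3 × E3))))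
    (husupp : ∀ t ∈ Set.Ico 0 τ, ∀ x ξ : E3, r < ‖ξ‖ → u t x ξ = 0)
    (huwave : ∀ ξ : E3, ∀ t ∈ Set.Ioo 0 τ, ∀ x : E3,
      deriv (fun s => deriv (fun s' => u s' x ξ) s) t - lapx (fun y => u t y ξ) x = f t x ξ)
    (hu0 : ∀ x ξ : E3, u 0 x ξ = 0)
    (hu0t : ∀ x ξ : E3, timeD (fun s => u s x ξ) 0 = 0)    -- the initial fields are `C²` and compatible
    (Bin : E3 → E3)
    (hEinreg : ContDiff ℝ 2 Ein) (hBinreg : ContDiff ℝ 2 Bin)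
    (hdivBin : ∀ x : E3, divg Bin x = 0)
    (hdivEin : ∀ x : E3, divg Ein x = ∫ ξ : E3, f 0 x ξ)
    -- `A_I` is `C²`, divergence free, with curl `B^in`
    (hAIreg : ContDiff ℝ 2 AI)
    (hdivAI : ∀ x : E3, divg AI x = 0)
    (hcurlAI : ∀ x : E3, curl3 AI x = Bin x)
    -- `A⁰` is `C²` and solves the homogeneous wave equation with data `(A_I, -E^in)`
    (hA0reg : ContDiffOn ℝ 2 (fun p : ℝ × E3 => A0 p.1 p.2)
      (Set.Ico 0 τ ×ˢ (Set.univ : Set E3)))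
    (hA0wave : ∀ t ∈ Set.Ioo 0 τ, ∀ x : E3,
      deriv (fun s => deriv (fun s' => A0 s' x) s) t - lapxV (A0 t) x = 0)
    (hA00 : ∀ x : E3, A0 0 x = AI x)
    (hA00t : ∀ x : E3, timeD (fun s => A0 s x) 0 = -Ein x) :
    (∀ t ∈ Set.Ioo 0 τ, ∀ x : E3,
        timeD (fun s => EP A0 u s x) t - curl3 (BP A0 u t) x
          = -∫ ξ : E3, f t x ξ • vrel ξ)
    ∧ (∀ t ∈ Set.Ioo 0 τ, ∀ x : E3, divg (EP A0 u t) x = ∫ ξ : E3, f t x ξ)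
    ∧ (∀ t ∈ Set.Ioo 0 τ, ∀ x : E3,
        timeD (fun s => BP A0 u s x) t + curl3 (EP A0 u t) x = 0)
    ∧ (∀ t ∈ Set.Ioo 0 τ, ∀ x : E3, divg (BP A0 u t) x = 0)
    ∧ (∀ x : E3, EP A0 u 0 x = Ein x)
    ∧ (∀ x : E3, BP A0 u 0 x = Bin x) := by
  have hA0' : ContDiffOn ℝ 2 (fun p : ℝ × E3 => A0 p.1 p.2) (SLB τ) := hA0reg
  set U : ℝ × E3 → E3 → ℝ := fun p ξ => u p.1 p.2 ξ with hU
  set UV : ℝ × E3 → E3 → E3 := fun p ξ => u p.1 p.2 ξ • vrel ξ with hUV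
  have rU : ContDiffOn ℝ 2 (Function.uncurry U) (SLB τ ×ˢ univ) := reidx hureg
  have rUV : ContDiffOn ℝ 2 (Function.uncurry UV) (SLB τ ×ˢ univ) := reidxv hureg
  have zU : ∀ p ∈ SLB τ, ∀ ξ, r < ‖ξ‖ → U p ξ = 0 := fun p hp ξ hξ => husupp p.1 hp.1 p.2 ξ hξ
  have zUV : ∀ p ∈ SLB τ, ∀ ξ, r < ‖ξ‖ → UV p ξ = 0 := fun p hp ξ hξ => by
    simp [hUV, husupp p.1 hp.1 p.2 ξ hξ]
  have rf : ContDiffOn ℝ 1 (Function.uncurry (fun (p : ℝ × E3) (ξ : E3) => f p.1 p.2 ξ))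
    (SLB τ ×ˢ univ) := reidx hfreg
  have rfV : ContDiffOn ℝ 1 (Function.uncurry (fun (p : ℝ × E3) (ξ : E3) => f p.1 p.2 ξ • vrel ξ))
    (SLB τ ×ˢ univ) := reidxv hfreg
  set φ : ℝ × E3 → ℝ := fun p => ∫ ξ, U p ξ with hφd
  set Iv : ℝ × E3 → E3 := fun p => ∫ ξ, UV p ξ with hIv
  set Av : ℝ × E3 → E3 := fun p => A0 p.1 p.2 + Iv p with hAvd
  set ρ : ℝ × E3 → ℝ := fun p => ∫ ξ, f p.1 p.2 ξ with hρd
  set Jv : ℝ × E3 → E3 := fun p => ∫ ξ, f p.1 p.2 ξ • vrel ξ with hJd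
  have hφ : ContDiffOn ℝ 2 φ (SLB τ) := param_C2 rU zU
  have hI : ContDiffOn ℝ 2 Iv (SLB τ) := param_C2 rUV zUV
  have hA : ContDiffOn ℝ 2 Av (SLB τ) := hA0'.add hI
  have hρ : ContDiffOn ℝ 1 ρ (SLB τ) :=
    param_C1 rf (fun p hp ξ hξ => hfsupp p.1 hp.1 p.2 ξ hξ)
  have hJ : ContDiffOn ℝ 1 Jv (SLB τ) :=
    param_C1 rfV (r := r) (fun p hp ξ hξ => by simp [hfsupp p.1 hp.1 p.2 ξ hξ])
  have hI1 := hI.of_le (m := 1) (by norm_num)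
  have hA1 := hA.of_le (m := 1) (by norm_num)
  have hA01 := hA0'.of_le (m := 1) (by norm_num)
  have h0 : (0 : ℝ) ∈ Ico 0 τ := ⟨le_rfl, hτ⟩
  have rUξ := fun ξ => slice_xi rU ξ
  have hLU : ∀ ξ, (fun q => UV q ξ)
      = fun q => ContinuousLinearMap.toSpanSingleton ℝ (vrel ξ) (U q ξ) := fun ξ => by
    funext q
    simp [hUV, hU, ContinuousLinearMap.toSpanSingleton_apply]
  -- wave equations for the kernels
  have wU : ∀ t ∈ Ioo 0 τ, ∀ x ξ, DD τ eT (DD τ eT (fun q => U q ξ)) (t, x)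
      - ∑ k, DD τ (eX k) (DD τ (eX k) (fun q => U q ξ)) (t, x) = f t x ξ := by
    intro t ht x ξ
    rw [← huwave ξ t ht x, ← conv_tt (rUξ ξ) ht x]
    congr 1
    exact Finset.sum_congr rfl fun k _ =>
      (conv_xx (rUξ ξ) (Ioo_subset_Ico_self ht) x k).symm
  have wUV : ∀ t ∈ Ioo 0 τ, ∀ x ξ, DD τ eT (DD τ eT (fun q => UV q ξ)) (t, x)
      - ∑ k, DD τ (eX k) (DD τ (eX k) (fun q => UV q ξ)) (t, x) = f t x ξ • vrel ξ := by
    intro t ht x ξ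
    have hp : (t, x) ∈ SLB τ := mem_SLB (Ioo_subset_Ico_self ht)
    rw [hLU]
    simp only [DD2_clm _ (rUξ ξ) hp]
    rw [← map_sum, ← map_sub, wU t ht x ξ, ContinuousLinearMap.toSpanSingleton_apply]
  have wA0 : ∀ t ∈ Ioo 0 τ, ∀ x, DD τ eT (DD τ eT (fun p : ℝ × E3 => A0 p.1 p.2)) (t, x)
      - ∑ k, DD τ (eX k) (DD τ (eX k) (fun p : ℝ × E3 => A0 p.1 p.2)) (t, x) = 0 := by
    intro t ht x
    rw [← hA0wave t ht x, ← conv_tt hA0' ht x]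
    congr 1
    exact Finset.sum_congr rfl fun k _ =>
      (conv_xx hA0' (Ioo_subset_Ico_self ht) x k).symm
  have DA : ∀ p ∈ SLB τ, ∀ v, DD τ v Av p = DD τ v (fun p : ℝ × E3 => A0 p.1 p.2) p + DD τ v Iv p :=
    fun p hp v => DD_add hA01 hI1 hp v
  have DA2 : ∀ p ∈ SLB τ, ∀ v w, DD τ v (DD τ w Av) p
      = DD τ v (DD τ w (fun p : ℝ × E3 => A0 p.1 p.2)) p + DD τ v (DD τ w Iv) p := by
    intro p hp v w
    rw [DD_congr hp v (fun q hq => DA q hq w)]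
    exact DD_add (DD_contDiffOn1 hA0' w) (DD_contDiffOn1 hI w) hp v
  have wAv : ∀ t ∈ Ioo 0 τ, ∀ x, DD τ eT (DD τ eT Av) (t, x)
      - ∑ k, DD τ (eX k) (DD τ (eX k) Av) (t, x) = Jv (t, x) := by
    intro t ht x
    have hp : (t, x) ∈ SLB τ := mem_SLB (Ioo_subset_Ico_self ht)
    have h1 := param_wave rUV zUV hp (wUV t ht x)
    have h2 := wA0 t ht x
    simp only [DA2 _ hp, Finset.sum_add_distrib]
    rw [add_sub_add_comm, h2, zero_add]
    exact h1
  -- initial data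
  have dU0 : ∀ x ξ, DD τ eT (fun q => U q ξ) (0, x) = 0 := by
    intro x ξ
    rw [← slice_timeD ((rUξ ξ).of_le (by norm_num)) h0 x]
    exact hu0t x ξ
  have dφ0 : ∀ x, DD τ eT φ (0, x) = 0 := by
    intro x
    rw [hφd, param_DD (rU.of_le (by norm_num)) zU (mem_SLB h0)]
    simp [dU0]
  have dI0 : ∀ x, DD τ eT Iv (0, x) = 0 := by
    intro x
    rw [hIv, param_DD (rUV.of_le (by norm_num)) zUV (mem_SLB h0)]
    have : ∀ ξ, DD τ eT (fun q => UV q ξ) (0, x) = 0 := by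
      intro ξ
      rw [hLU, DD_clm _ ((rUξ ξ).of_le (by norm_num)) (mem_SLB h0), dU0, map_zero]
    simp [this]
  have Av0 : ∀ x, Av (0, x) = AI x := by
    intro x
    simp [hAvd, hIv, hUV, hu0, hA00]
  have φ0 : ∀ x, φ (0, x) = 0 := by
    intro x
    simp [hφd, hU, hu0]
  have EA0 : ∀ x, EA φ Av 0 x = Ein x := by
    intro x
    have h1 : (fun y => φ (0, y)) = fun _ => (0 : ℝ) := funext φ0
    have h2 : DD τ eT (fun p : ℝ × E3 => A0 p.1 p.2) (0, x) = -Ein x := by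
      rw [← hA00t x]
      exact (slice_timeD hA01 h0 x).symm
    rw [EA, h1, slice_timeD hA1 h0, DA _ (mem_SLB h0), h2, dI0]
    simp [gradient]
  have BA0 : ∀ x, BA Av 0 x = Bin x := by
    intro x
    rw [← hcurlAI x, BA]
    simp only [Av0]
  have H : GSys τ φ ρ (vcp Av) (vcp Jv) := by
    refine ⟨hτ, hφ, vcp_cd hA, hρ, vcp_cd hJ, ?_, ?_, ?_, ?_, ?_⟩
    · intro t ht x
      exact param_wave rU zU (mem_SLB (Ioo_subset_Ico_self ht)) (wU t ht x)
    · intro i t ht x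
      have hp : (t, x) ∈ SLB τ := mem_SLB (Ioo_subset_Ico_self ht)
      have h2 : ∀ v w, DD τ v (DD τ w (vcp Av i)) (t, x) = (DD τ v (DD τ w Av) (t, x)) i :=
        fun v w => DD2_clm (EuclideanSpace.proj i : E3 →L[ℝ] ℝ) hA hp v w
      have h3 := congrArg (fun z : E3 => z i) (wAv t ht x)
      simp only [h2]
      rw [vcp, ← h3]
      simp
    · intro t ht x
      have h1 := hcons t ht x
      rw [show deriv (fun s => ∫ ξ : E3, f s x ξ) t = DD τ eT ρ (t, x) from
        (slice_hasDerivAt hρ ht x).deriv] at h1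
      rw [← h1]
      congr 1
      exact Finset.sum_congr rfl fun k _ =>
        (slice_fderiv (vcp_cd hJ k) (Ioo_subset_Ico_self ht) x (e3 k)).symm
    · intro x
      rw [Gf, dφ0, zero_add]
      refine Eq.trans ?_ (hdivAI x)
      rw [divg]
      refine Finset.sum_congr rfl fun k _ => ?_
      rw [slice_fd (vcp_cd hA1 k) h0 k x, pd3]
      simp only [vcp, Av0]
    · intro x
      have h1 : ∀ i, (fun y => Ef τ φ (vcp Av) i (0, y)) = fun y => Ein y i := by
        intro i
        funext y
        rw [← EA_coord hφ hA h0, EA0]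
      have h2 : ∀ i, ContDiffOn ℝ 1 (Ef τ φ (vcp Av) i) (SLB τ) := fun i =>
        ((DD_contDiffOn1 (vcp_cd hA i) eT).neg).sub (DD_contDiffOn1 hφ (eX i))
      rw [show ρ (0, x) = divg Ein x from (hdivEin x).symm, divg]
      refine Finset.sum_congr rfl fun k _ => ?_
      rw [slice_fd (h2 k) h0 k x, pd3, h1]
  exact ⟨fun t ht x => (maxwell_abs hφ hA H ht x).1, fun t ht x => (maxwell_abs hφ hA H ht x).2.1,
    fun t ht x => (maxwell_abs hφ hA H ht x).2.2.1, fun t ht x => (maxwell_abs hφ hA H ht x).2.2.2,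
    EA0, BA0⟩
end
end

section
/- First cone identity for the streaming operator: let v ∈ ℝ³ with |v| < 1. Then for every φ ∈ C_c^∞(ℝ⁴), ⟨Y, (t − x·v) ∂_t φ⟩ = ⟨Y, t (∂_t + v·∇_x) φ⟩; that is, (t − x·v) ∂_t Y = t T Y in the sense of distributions on ℝ⁴, where T = ∂_t + v·∇_x. -/
open MeasureTheory Real Set Filter Metric RealInnerProductSpace
open scoped ENNReal NNReal Topology

noncomputable section

/-- The rotation invariant surface measure on the unit sphere `S² ⊂ ℝ³`
(with total mass `4π`). -/
def sphMeasure : Measure (Metric.sphere (0 : E3) 1) := (volume : Measure E3).toSphere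

/-- The forward fundamental solution `Y` of the d'Alembertian in `1+3` dimensions, as a
measure on `ℝ⁴ = ℝₜ × ℝ³ₓ`: it acts on a function `φ` by
`⟨Y,φ⟩ = ∫₀^∞ (1/(4πt)) ∫_{|x|=t} φ(t,x) dσ_t(x) dt
       = ∫₀^∞ (t/(4π)) ∫_{S²} φ(t,tω) dσ(ω) dt`. -/
def Ymeas : Measure (ℝ × E3) :=
  Measure.map (fun q : ℝ × Metric.sphere (0 : E3) 1 => (q.1, q.1 • (q.2 : E3)))
    ((((volume : Measure ℝ).restrict (Set.Ioi 0)).withDensity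
        fun t => ENNReal.ofReal (t / (4 * Real.pi))).prod sphMeasure)

/-- Time derivative `∂ₜ` of a function on `ℝ⁴ = ℝₜ × ℝ³ₓ`. -/
def dt4 (g : ℝ × E3 → ℝ) (p : ℝ × E3) : ℝ := fderiv ℝ g p ((1 : ℝ), (0 : E3))

/-- Spatial partial derivative `∂_{x_i}` of a function on `ℝ⁴ = ℝₜ × ℝ³ₓ`. -/
def dx4 (i : Fin 3) (g : ℝ × E3 → ℝ) (p : ℝ × E3) : ℝ := fderiv ℝ g p ((0 : ℝ), e3 i)

/-- The streaming operator `T = ∂ₜ + v·∇ₓ`, i.e. the directional derivative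
along `(1,v)`. -/
def Tstr (v : E3) (g : ℝ × E3 → ℝ) (p : ℝ × E3) : ℝ := fderiv ℝ g p ((1 : ℝ), v)

lemma Y_int (F : ℝ × E3 → ℝ) (hF : Continuous F) :
    ∫ p, F p ∂Ymeas = ∫ x : E3, (1 / (4 * Real.pi)) * (‖x‖⁻¹ * F (‖x‖, x)) := by
  have hdim : Module.finrank ℝ E3 - 1 = 2 := by simp
  have hr : (volume : Measure ℝ).restrict (Set.Ioi 0)
      = Measure.map (Subtype.val : Ioi (0:ℝ) → ℝ) (Measure.comap Subtype.val volume) :=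
    (map_comap_subtype_coe measurableSet_Ioi _).symm
  have : SigmaFinite (Measure.comap (Subtype.val : Ioi (0:ℝ) → ℝ) volume) := by
    have h0 : Measure.volumeIoiPow 0 = Measure.comap (Subtype.val : Ioi (0:ℝ) → ℝ) volume := by
      simp [Measure.volumeIoiPow]
    rw [← h0]
    infer_instance
  have : IsFiniteMeasure sphMeasure := by unfold sphMeasure; infer_instance
  have hme : MeasurableEmbedding (Prod.map (Subtype.val : Ioi (0:ℝ) → ℝ)
      (id : Metric.sphere (0 : E3) 1 → _)) :=
    (MeasurableEmbedding.subtype_coe measurableSet_Ioi).prodMap MeasurableEmbedding.id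
  have hL : ∫ p, F p ∂Ymeas = ∫ q : Ioi (0:ℝ) × Metric.sphere (0 : E3) 1,
      (q.1.1 / (4 * Real.pi)) * F (q.1.1, q.1.1 • (q.2 : E3))
        ∂((Measure.comap Subtype.val volume).prod sphMeasure) := by
    unfold Ymeas
    rw [integral_map (by fun_prop) hF.aestronglyMeasurable,
      prod_withDensity_left (by fun_prop),
      integral_withDensity_eq_integral_toReal_smul (by fun_prop) (by simp)]
    have h2 : ((volume : Measure ℝ).restrict (Set.Ioi 0)).prod sphMeasure =
        Measure.map (Prod.map (Subtype.val : Ioi (0:ℝ) → ℝ)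
          (id : Metric.sphere (0 : E3) 1 → _))
          ((Measure.comap Subtype.val volume).prod sphMeasure) := by
      rw [← Measure.map_prod_map _ _ measurable_subtype_coe measurable_id, ← hr,
        Measure.map_id]
    rw [h2, hme.integral_map]
    refine integral_congr_ae (.of_forall fun q => ?_)
    have : (0:ℝ) < q.1.1 := q.1.2
    simp only [Prod.map_fst, Prod.map_snd, id, smul_eq_mul]
    rw [ENNReal.toReal_ofReal (by positivity)]
  have hR : ∫ x : E3, (1 / (4 * Real.pi)) * (‖x‖⁻¹ * F (‖x‖, x)) =
      ∫ q : Metric.sphere (0 : E3) 1 × Ioi (0:ℝ),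
      (q.2.1 / (4 * Real.pi)) * F (q.2.1, q.2.1 • (q.1 : E3))
        ∂(sphMeasure.prod (Measure.comap Subtype.val volume)) := by
    have h1 : ∫ x : E3, (1 / (4 * Real.pi)) * (‖x‖⁻¹ * F (‖x‖, x)) =
        ∫ x : ({(0)}ᶜ : Set E3), (1 / (4 * Real.pi)) * (‖x.1‖⁻¹ * F (‖x.1‖, x.1))
          ∂((volume : Measure E3).comap (↑)) := by
      rw [integral_subtype_comap (measurableSet_singleton _).compl
        fun x : E3 ↦ (1 / (4 * Real.pi)) * (‖x‖⁻¹ * F (‖x‖, x)), restrict_compl_singleton]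
    have h2 := (volume : Measure E3).measurePreserving_homeomorphUnitSphereProd.integral_comp
        (Homeomorph.measurableEmbedding _)
        (fun q => (1 / (4 * Real.pi)) * (q.2.1⁻¹ * F (q.2.1, q.2.1 • (q.1 : E3))))
    rw [h1]
    refine Eq.trans (integral_congr_ae (.of_forall fun x => ?_)) (h2.trans ?_)
    · have hx : ‖x.1‖ ≠ 0 := norm_ne_zero_iff.2 x.2
      simp [smul_smul, hx]
    · rw [hdim, Measure.volumeIoiPow, prod_withDensity_right (by fun_prop),
        integral_withDensity_eq_integral_toReal_smul (by fun_prop) (by simp)]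
      refine integral_congr_ae (.of_forall fun q => ?_)
      have : (0:ℝ) < q.2.1 := q.2.2
      simp only [smul_eq_mul]
      rw [ENNReal.toReal_ofReal (by positivity)]
      field_simp
  rw [hL, hR]
  exact (integral_prod_swap (fun q : Metric.sphere (0 : E3) 1 × Ioi (0:ℝ) =>
      (q.2.1 / (4 * Real.pi)) * F (q.2.1, q.2.1 • (q.1 : E3))))

lemma cone_emb : Topology.IsClosedEmbedding (fun x : E3 => (‖x‖, x)) := by
  refine Topology.IsClosedEmbedding.of_continuous_injective_isClosedMap (by fun_prop)
    (fun x y h => (Prod.ext_iff.1 h).2) ?_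
  intro s hs
  have : (fun x : E3 => (‖x‖, x)) '' s = {p : ℝ × E3 | p.1 = ‖p.2‖} ∩ Prod.snd ⁻¹' s := by
    ext ⟨t, x⟩
    simp only [mem_image, Prod.mk.injEq, mem_inter_iff, mem_ofPred_eq, mem_preimage]
    constructor
    · rintro ⟨y, hy, rfl, rfl⟩; exact ⟨rfl, hy⟩
    · rintro ⟨h, hx⟩; exact ⟨x, hx, h.symm, rfl⟩
  rw [this]
  exact (isClosed_eq continuous_fst (by fun_prop)).inter (hs.preimage continuous_snd)

lemma lineDeriv_cone (v : E3) (φ : ℝ × E3 → ℝ) (hφ : Differentiable ℝ φ) (x : E3) (hx : x ≠ 0) :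
    lineDeriv ℝ (fun x : E3 => φ (‖x‖, x)) x v =
      fderiv ℝ φ (‖x‖, x) (‖x‖⁻¹ * ⟪x, v⟫, v) := by
  have hn : HasFDerivAt (fun x : E3 => ‖x‖) (‖x‖⁻¹ • innerSL ℝ x) x := by
    have h1 := (hasStrictFDerivAt_norm_sq x).hasFDerivAt.sqrt (by simpa using hx)
    have h2 : (fun x : E3 => √(‖x‖^2)) = fun x => ‖x‖ := by
      funext y; exact Real.sqrt_sq (norm_nonneg y)
    rw [h2] at h1
    have h4 : ‖x‖⁻¹ • innerSL ℝ x = (1 / (2 * √(‖x‖ ^ 2))) • (2:ℕ) • innerSL ℝ x := by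
      ext y
      rw [Real.sqrt_sq (norm_nonneg x)]
      simp only [ContinuousLinearMap.smul_apply, nsmul_eq_mul, smul_eq_mul]
      push_cast
      field_simp
    rw [h4]
    exact h1
  have h := HasFDerivAt.comp (f := fun x : E3 => (‖x‖, x)) x (hφ (‖x‖, x)).hasFDerivAt (hn.prodMk (hasFDerivAt_id x))
  have h3 := (h.hasLineDerivAt v).lineDeriv
  refine h3.trans ?_
  simp

/-- **First cone identity for the streaming operator**: for `|v| < 1` and every
`φ ∈ C_c^∞(ℝ⁴)`, `⟨Y, (t - x·v) ∂ₜφ⟩ = ⟨Y, t(∂ₜ + v·∇ₓ)φ⟩`, i.e.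
`(t - x·v) ∂ₜY = t T Y` in the sense of distributions on `ℝ⁴`. -/
theorem first_cone_identity (v : E3) (hv : ‖v‖ < 1) (φ : ℝ × E3 → ℝ)
    (hφ : ContDiff ℝ (⊤ : ℕ∞) φ) (hφc : HasCompactSupport φ) :
    ∫ p : ℝ × E3, (p.1 - ⟪p.2, v⟫) * dt4 φ p ∂Ymeas
      = ∫ p : ℝ × E3, p.1 * Tstr v φ p ∂Ymeas := by
  have hd : Differentiable ℝ φ := hφ.differentiable (by simp)
  have hcf : Continuous (fderiv ℝ φ) := hφ.continuous_fderiv (by simp)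
  have hdt : Continuous (dt4 φ) := hcf.clm_apply continuous_const
  have hT : Continuous (Tstr v φ) := hcf.clm_apply continuous_const
  have hdtc : HasCompactSupport (dt4 φ) :=
    (hφc.fderiv ℝ).comp_left (g := fun L : (ℝ × E3) →L[ℝ] ℝ => L ((1:ℝ), (0:E3))) (by simp)
  have hTc : HasCompactSupport (Tstr v φ) :=
    (hφc.fderiv ℝ).comp_left (g := fun L : (ℝ × E3) →L[ℝ] ℝ => L ((1:ℝ), v)) (by simp)
  rw [Y_int _ (by fun_prop), Y_int _ (by fun_prop), integral_const_mul, integral_const_mul]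
  congr 1
  obtain ⟨C, hC⟩ := ContDiff.lipschitzWith_of_hasCompactSupport hφc hφ (by simp)
  have hlip := hC.comp ((lipschitzWith_one_norm (E := E3)).prodMk LipschitzWith.id)
  have hcs : HasCompactSupport (φ ∘ fun x : E3 => (‖x‖, x)) := hφc.comp_isClosedEmbedding cone_emb
  have hzero := LipschitzWith.integral_lineDeriv_mul_eq (μ := (volume : Measure E3))
    (LipschitzWith.const (1:ℝ)) hlip hcs (-v)
  simp only [neg_neg, lineDeriv, deriv_const, zero_mul, integral_zero, mul_one] at hzero
  have iA : Integrable (fun x : E3 => dt4 φ (‖x‖, x)) :=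
    (hdt.comp cone_emb.continuous).integrable_of_hasCompactSupport
      (hdtc.comp_isClosedEmbedding cone_emb)
  have iT : Integrable (fun x : E3 => Tstr v φ (‖x‖, x)) :=
    (hT.comp cone_emb.continuous).integrable_of_hasCompactSupport
      (hTc.comp_isClosedEmbedding cone_emb)
  have iB : Integrable (fun x : E3 => (‖x‖⁻¹ * ⟪x, v⟫) * dt4 φ (‖x‖, x)) := by
    refine iA.bdd_mul (c := ‖v‖) (by fun_prop) (.of_forall fun x => ?_)
    rw [norm_mul, norm_inv, norm_norm]
    rcases eq_or_ne x 0 with rfl | hx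
    · simp
    · have := norm_inner_le_norm (𝕜 := ℝ) x v
      have hx' : 0 < ‖x‖ := norm_pos_iff.2 hx
      rw [inv_mul_le_iff₀ hx']
      exact this
  have hne : ∀ᵐ x : E3, x ≠ 0 := Measure.ae_ne volume 0
  have e1 : ∫ x : E3, ‖x‖⁻¹ * ((‖x‖ - ⟪x, v⟫) * dt4 φ (‖x‖, x)) =
      ∫ x : E3, (dt4 φ (‖x‖, x) - (‖x‖⁻¹ * ⟪x, v⟫) * dt4 φ (‖x‖, x)) := by
    refine integral_congr_ae ?_
    filter_upwards [hne] with x hx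
    have hx' : ‖x‖ ≠ 0 := norm_ne_zero_iff.2 hx
    field_simp
  have e2 : ∫ x : E3, ‖x‖⁻¹ * (‖x‖ * Tstr v φ (‖x‖, x)) = ∫ x : E3, Tstr v φ (‖x‖, x) := by
    refine integral_congr_ae ?_
    filter_upwards [hne] with x hx
    have hx' : ‖x‖ ≠ 0 := norm_ne_zero_iff.2 hx
    field_simp
  have e3' : ∫ x : E3, lineDeriv ℝ (φ ∘ fun x : E3 => (‖x‖, x)) x v =
      ∫ x : E3, (Tstr v φ (‖x‖, x) -
        (dt4 φ (‖x‖, x) - (‖x‖⁻¹ * ⟪x, v⟫) * dt4 φ (‖x‖, x))) := by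
    refine integral_congr_ae ?_
    filter_upwards [hne] with x hx
    refine (lineDeriv_cone v φ hd x hx).trans ?_
    unfold Tstr dt4
    rw [← smul_eq_mul (‖x‖⁻¹ * ⟪x, v⟫), ← map_smul, ← map_sub, ← map_sub]
    congr 1
    ext <;> simp
  rw [e1, e2]
  have e4 := integral_sub iT (iA.sub iB)
  simp only [Pi.sub_apply] at e4
  have e5 : ∫ x : E3, lineDeriv ℝ (φ ∘ fun x : E3 => (‖x‖, x)) x v = 0 := hzero.symm
  rw [e3', e4] at e5
  linarith
end
end
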